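/- arXiv:1209.3296 — 2 statements merged into one kernel-verified Lean document; each statement's English description precedes it below -/
import Mathlib

section
/- Define a partial order on V by: x ≤ y iff x₊ = y₊ and w_x ≤ w_y in the Bruhat order of W_R, and for x ≤ y put [x,y] := {z ∈ V : x ≤ z ≤ y}; let Conv denote the convex hull in V. Then for all x, y ∈ V: (i) Conv [y₊, y] ⊆ Conv(W₀ y); (ii) if Conv [x₊, x] = Conv [y₊, y] then x = y; (iii) if x ∈ Conv [y₊, y] then Conv [x₊, x] ⊆ Conv [y₊, y]. -/
open scoped RealInnerProductSpace BigOperators Classical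

noncomputable section

/-- Alternating composition `A ∘ B ∘ A ∘ ⋯` with `m` factors (starting with `A`). -/
def altComp {α : Type*} (A B : α → α) : ℕ → (α → α)
  | 0 => id
  | m + 1 => A ∘ altComp B A m

/-- The sign of a real number, as an integer (with `sgnZ 0 = 0`). -/
def sgnZ (x : ℝ) : ℤ := if 0 < x then 1 else if x < 0 then -1 else 0

/-- The function `v(x) = (1-t²)∫₀ˣ dy/(1-2t cos y+t²)`. -/
def mvfun (t x : ℝ) : ℝ :=
  (1 - t ^ 2) * ∫ y in (0:ℝ)..x, 1 / (1 - 2 * t * Real.cos y + t ^ 2)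

section AffineOps

variable {V : Type*} [NormedAddCommGroup V] [InnerProductSpace ℝ V]

/-- The coroot `α∨ = 2α/⟨α,α⟩`. -/
def coroot (α : V) : V := (2 / ⟪α, α⟫) • α

/-- The affine root `a = α∨ + r c` (encoded as the pair `(α, r)`), as an affine
function on `V`. -/
def aval (c : ℝ) (a : V × ℤ) (x : V) : ℝ := ⟪x, coroot a.1⟫ + a.2 * c

/-- The affine reflection `s_a(x) = x - a(x) α` attached to `a = α∨ + r c`. -/
def sAff (c : ℝ) (a : V × ℤ) (x : V) : V := x - aval c a x • a.1

/-- `w` maps the affine root `a` to the affine root `b`, i.e. `(wa)(x) = a(w⁻¹x) = b(x)`. -/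
def mapsRoot (c : ℝ) (w : Equiv.Perm V) (a b : V × ℤ) : Prop :=
  ∀ x : V, aval c a (w⁻¹ x) = aval c b x

/-- The linear part `w′` of an affine transformation `w`. -/
def linPart (w : Equiv.Perm V) (x : V) : V := w x - w 0

variable {R : Type*} [Field R]

/-- The difference-reflection operator `T̂_a`. -/
def hatT (c : ℝ) (τ : V × ℤ → R) (a : V × ℤ) (f : V → R) (x : V) : R :=
  if 0 < aval c a x then τ a * f (sAff c a x)
  else if aval c a x = 0 then τ a * f x
  else (τ a)⁻¹ * f (sAff c a x) + (τ a - (τ a)⁻¹) * f x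

/-- The discrete integral operator `J_a`. -/
def Jop (c : ℝ) (a : V × ℤ) (f : V → R) (x : V) : R :=
  if 0 < aval c a x then
    - ∑ k ∈ Finset.Icc (1 : ℤ) ⌊aval c a x⌋, f (x - k • a.1)
  else if aval c a x = 0 then 0
  else ∑ k ∈ Finset.Ico (0 : ℤ) (-⌊aval c a x⌋), f (x + k • a.1)

/-- The integral-reflection operator `I_a = τ_a s_a + (τ_a - τ_a⁻¹) J_a`. -/
def Iop (c : ℝ) (τ : V × ℤ → R) (a : V × ℤ) (f : V → R) (x : V) : R :=
  τ a * f (sAff c a x) + (τ a - (τ a)⁻¹) * Jop c a f x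

end AffineOps

/-- An irreducible reduced crystallographic root system spanning `V`, together with a
choice of positive roots, simple roots, and the highest short root. -/
structure RootSystemData (V : Type*) [NormedAddCommGroup V] [InnerProductSpace ℝ V] :
    Type _ where
  n : ℕ
  n_pos : 1 ≤ n
  rank_eq : Module.finrank ℝ V = n
  R0 : Finset V
  ne_zero : ∀ α ∈ R0, α ≠ (0 : V)
  span_top : Submodule.span ℝ (R0 : Set V) = ⊤
  reduced : ∀ α ∈ R0, ∀ t : ℝ, t • α ∈ R0 → t = 1 ∨ t = -1
  crystallographic : ∀ α ∈ R0, ∀ β ∈ R0, ∃ k : ℤ, ⟪β, coroot α⟫ = (k : ℝ)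
  reflect_mem : ∀ α ∈ R0, ∀ β ∈ R0, β - ⟪β, coroot α⟫ • α ∈ R0
  irreducible : ∀ S : Finset V, S ⊆ R0 →
      (∀ a ∈ S, ∀ b ∈ R0, b ∉ S → ⟪a, b⟫ = 0) → S = ∅ ∨ S = R0
  pos : Finset V
  pos_subset : pos ⊆ R0
  pos_or_neg : ∀ α ∈ R0, α ∈ pos ∨ -α ∈ pos
  pos_not_both : ∀ α ∈ pos, -α ∉ pos
  pos_add : ∀ α ∈ pos, ∀ β ∈ pos, α + β ∈ R0 → α + β ∈ pos
  simpleRoot : Fin n → V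
  simpleRoot_mem : ∀ j, simpleRoot j ∈ pos
  pos_natCombo : ∀ α ∈ pos, ∃ k : Fin n → ℕ, α = ∑ j, (k j : ℝ) • simpleRoot j
  hshort : V
  hshort_mem : hshort ∈ pos
  hshort_short : ∀ α ∈ R0, ‖hshort‖ ≤ ‖α‖
  hshort_highest : ∀ α ∈ R0, ‖α‖ = ‖hshort‖ →
      ∃ k : Fin n → ℕ, hshort - α = ∑ j, (k j : ℝ) • simpleRoot j

namespace RootSystemData

variable {V : Type*} [NormedAddCommGroup V] [InnerProductSpace ℝ V]
variable (D : RootSystemData V)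

/-- The weight lattice `P`. -/
def weightLattice : Set V :=
  {x : V | ∀ α ∈ D.R0, ∃ k : ℤ, ⟪x, coroot α⟫ = (k : ℝ)}

/-- The root lattice `Q`. -/
def rootLattice : Set V := (Submodule.span ℤ (D.R0 : Set V) : Set V)

/-- The coweight lattice `P∨`. -/
def coweightLattice : Set V :=
  {x : V | ∀ α ∈ D.R0, ∃ k : ℤ, ⟪x, α⟫ = (k : ℝ)}

/-- The dominant cone. -/
def dominant : Set V := {x : V | ∀ α ∈ D.pos, 0 ≤ ⟪x, coroot α⟫}

/-- `ω` is a minuscule (dominant) weight. -/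
def IsMinuscule (ω : V) : Prop :=
  ω ∈ D.weightLattice ∧ ω ∈ D.dominant ∧ ω ≠ 0 ∧
    ∀ α ∈ D.pos, ⟪ω, coroot α⟫ ≤ 1

/-- `ω` is the quasi-minuscule weight, i.e. the highest short root. -/
def IsQuasiMinuscule (ω : V) : Prop := ω = D.hshort

/-- The saturated set `P_ϑ` containing the (quasi-)minuscule weights. -/
def Ptheta : Set V :=
  {ν : V | ν ∈ D.weightLattice ∧ ∀ α ∈ D.R0, α ≠ ν → |⟪ν, coroot α⟫| ≤ 1}

/-- Half sum of the positive roots. -/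
def rhoHalf : V := (2⁻¹ : ℝ) • ∑ α ∈ D.pos, α

/-- Half sum of the positive coroots. -/
def rhoVee : V := (2⁻¹ : ℝ) • ∑ α ∈ D.pos, coroot α

/-- `(α, r)` encodes an affine root. -/
def IsAffRoot (a : V × ℤ) : Prop := a.1 ∈ D.R0

/-- `(α, r)` encodes a positive affine root. -/
def IsAffPos (a : V × ℤ) : Prop :=
  a.1 ∈ D.R0 ∧ (1 ≤ a.2 ∨ (a.2 = 0 ∧ a.1 ∈ D.pos))

/-- `(α, r)` encodes a negative affine root. -/
def IsAffNeg (a : V × ℤ) : Prop := D.IsAffPos (-a.1, -a.2)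

/-- The simple affine roots `a₀ = -ϑ∨ + c`, `a_j = α_j∨`. -/
def aSimple (j : Fin (D.n + 1)) : V × ℤ :=
  Fin.cons (α := fun _ => V × ℤ) (-D.hshort, (1 : ℤ))
    (fun i => (D.simpleRoot i, (0 : ℤ))) j

/-- The reflections generating the finite Weyl group `W₀`. -/
def W0Gens : Set (Equiv.Perm V) :=
  {e | ∃ α ∈ D.R0, ∀ x, e x = x - ⟪x, coroot α⟫ • α}

/-- The finite Weyl group `W₀`. -/
def W0 : Subgroup (Equiv.Perm V) := Subgroup.closure D.W0Gens

variable (c : ℝ)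

/-- The affine reflections generating the affine Weyl group `W_R`. -/
def AffGens : Set (Equiv.Perm V) :=
  {e | ∃ a : V × ℤ, D.IsAffRoot a ∧ ∀ x, e x = sAff c a x}

/-- The affine Weyl group `W_R`. -/
def WR : Subgroup (Equiv.Perm V) := Subgroup.closure (D.AffGens c)

/-- The translations `t_{cλ}`, `λ ∈ P`. -/
def TransGens : Set (Equiv.Perm V) :=
  {e | ∃ lam ∈ D.weightLattice, ∀ x : V, e x = x + c • lam}

/-- The extended affine Weyl group `W = W₀ ⋉ t(cP)`. -/
def Wext : Subgroup (Equiv.Perm V) :=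
  Subgroup.closure (D.AffGens c ∪ D.TransGens c)

/-- The set `R(w) = R⁺ ∩ w⁻¹(R⁻)`. -/
def RW (w : Equiv.Perm V) : Set (V × ℤ) :=
  {a | D.IsAffPos a ∧ ∃ b : V × ℤ, D.IsAffNeg b ∧ mapsRoot c w a b}

/-- The length `ℓ(w) = #R(w)`. -/
def len (w : Equiv.Perm V) : ℕ := (D.RW c w).ncard

/-- The closed fundamental alcove `A_c`. -/
def alcove : Set V := {x | ∀ a : V × ℤ, D.IsAffPos a → 0 ≤ aval c a x}

/-- `wmin x` is the unique shortest element of the affine Weyl group mapping `x` into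
the fundamental alcove. -/
def IsWmin (wmin : V → Equiv.Perm V) : Prop :=
  ∀ x : V, wmin x ∈ D.WR c ∧ (wmin x) x ∈ D.alcove c ∧
    ∀ w ∈ D.WR c, w x ∈ D.alcove c → D.len c (wmin x) < D.len c w ∨ w = wmin x

/-- One step in the Bruhat order: `w < w s_a` whenever `ℓ(w) < ℓ(w s_a)`. -/
def bruhatStep (w w' : Equiv.Perm V) : Prop :=
  ∃ a : V × ℤ, D.IsAffPos a ∧ ∃ e : Equiv.Perm V,
    (∀ x, e x = sAff c a x) ∧ w' = w * e ∧ D.len c w < D.len c w'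

/-- The Bruhat order on the affine Weyl group. -/
def bruhatLE (w w' : Equiv.Perm V) : Prop :=
  Relation.ReflTransGen (D.bruhatStep c) w w'

/-- The partial order on `V`: `x ≤ y` iff `x₊ = y₊` and `w_x ≤ w_y` (Bruhat). -/
def vle (wmin : V → Equiv.Perm V) (x y : V) : Prop :=
  (wmin x) x = (wmin y) y ∧ D.bruhatLE c (wmin x) (wmin y)

/-- The interval `[x, y]` for the order `vle`. -/
def vInterval (wmin : V → Equiv.Perm V) (x y : V) : Set V :=
  {z : V | D.vle c wmin x z ∧ D.vle c wmin z y}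

/-- The partial order `⪯` on the weight lattice:
`μ ⪯ λ` iff `λ - μ ∈ Q` and `Conv [μ₊, μ] ⊆ Conv [λ₊, λ]`. -/
def pleq (wmin : V → Equiv.Perm V) (μ lam : V) : Prop :=
  lam - μ ∈ D.rootLattice ∧
    convexHull ℝ (D.vInterval c wmin ((wmin μ) μ) μ)
      ⊆ convexHull ℝ (D.vInterval c wmin ((wmin lam) lam) lam)

section Ops

variable {R : Type*} [Field R]

/-- `τ` is a multiplicity function: nonvanishing on affine roots, and invariant
under the (extended affine) Weyl group action on the affine roots. -/
def IsMultiplicity (τ : V × ℤ → R) : Prop :=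
  (∀ a : V × ℤ, D.IsAffRoot a → τ a ≠ 0) ∧
    ∀ w ∈ D.Wext c, ∀ a b : V × ℤ, D.IsAffRoot a → D.IsAffRoot b →
      mapsRoot c w a b → τ a = τ b

/-- `τ_w = ∏_{a ∈ R(w)} τ_a`. -/
def tauw (τ : V × ℤ → R) (w : Equiv.Perm V) : R := ∏ᶠ a ∈ D.RW c w, τ a

/-- `τ₀`, the multiplicity of the affine simple root `a₀`. -/
def tauZero (τ : V × ℤ → R) : R := τ (-D.hshort, (1 : ℤ))

/-- The operator `I_{j₁} ∘ ⋯ ∘ I_{jℓ}` attached to a word in the simple reflections. -/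
def wordOp (τ : V × ℤ → R) (l : List (Fin (D.n + 1))) : (V → R) → V → R :=
  (l.map fun j => Iop c τ (D.aSimple j)).foldr (· ∘ ·) id

/-- `l` is a reduced word for `w`, i.e. `w = s_{j₁} ∘ ⋯ ∘ s_{jℓ}` with `ℓ = ℓ(w)`. -/
def IsReducedWord (w : Equiv.Perm V) (l : List (Fin (D.n + 1))) : Prop :=
  l.length = D.len c w ∧
    ∀ x : V, w x = ((l.map fun j => sAff c (D.aSimple j)).foldr (· ∘ ·) id) x

/-- `e∨_τ(η) = ∏_{α ∈ R₀⁺} τ_{α∨}^{⟨η,α∨⟩}`. -/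
def etau (τ : V × ℤ → R) (η : V) : R :=
  ∏ α ∈ D.pos, τ (α, (0 : ℤ)) ^ ⌊⟪η, coroot α⟫⌋

/-- `h∨_τ = τ₀² e∨_τ(ϑ)`. -/
def hvee (τ : V × ℤ → R) : R := D.tauZero τ ^ 2 * D.etau τ D.hshort

/-- `θ(μ) = #{b ∈ R(w_μ) : b(μ) = -2}`. -/
def theta (wmin : V → Equiv.Perm V) (μ : V) : ℕ :=
  {b : V × ℤ | b ∈ D.RW c (wmin μ) ∧ aval c b μ = -2}.ncard

/-- The coefficient `c_{λ,η} = θ(λ-η) e∨_τ(η) (h∨_τ)^{-sign⟨λ,η∨⟩}`. -/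
def ccoef (τ : V × ℤ → R) (wmin : V → Equiv.Perm V) (lam η : V) : R :=
  (D.theta c wmin (lam - η) : R) * D.etau τ η *
    D.hvee τ ^ (-sgnZ ⟪lam, coroot η⟫)

/-- The coefficient `a_{λ,ν} = τ_{w_{w_λ(λ-ν)}} τ_{w_{w_λ(λ-ν)} w_λ} τ_{w_λ}⁻¹`. -/
def acoef (τ : V × ℤ → R) (wmin : V → Equiv.Perm V) (lam ν : V) : R :=
  D.tauw c τ (wmin ((wmin lam) (lam - ν))) *
    D.tauw c τ (wmin ((wmin lam) (lam - ν)) * wmin lam) *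
    (D.tauw c τ (wmin lam))⁻¹

/-- The coefficient `b_{λ,ν}`. -/
def bcoef (τ : V × ℤ → R) (wmin : V → Equiv.Perm V) (lam ν : V) : R :=
  if (wmin (lam - ν)) (lam - ν) = (wmin lam) lam then
    D.tauw c τ (wmin ((wmin lam) (lam - ν))) ^ 2 *
      (if D.IsAffNeg (ν, ⌊(1 - ⟪lam, coroot ν⟫) / c⌋) then 1 else 0)
  else D.ccoef c τ wmin ((wmin lam) lam) (linPart (wmin lam) ν)

/-- The intertwining operator `(𝒥f)(λ) = τ_{w_λ}⁻¹ (I_{w_λ} f)(λ₊)`, where `Iw` assigns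
to each `w_λ` the composite of integral-reflection operators along a reduced word. -/
def Jcal (τ : V × ℤ → R) (wmin : V → Equiv.Perm V)
    (Iw : Equiv.Perm V → (V → R) → V → R) (f : V → R) (x : V) : R :=
  (D.tauw c τ (wmin x))⁻¹ * Iw (wmin x) f ((wmin x) x)

end Ops

/-- The Yang–Yang type Morse function `𝒱_μ`. -/
def morse (t : V → ℝ) (μ ξ : V) : ℝ :=
  (c / 2) * ⟪ξ, ξ⟫ - 2 * Real.pi * ⟪D.rhoVee + μ, ξ⟫ +
    ∑ α ∈ D.pos, (2 / ⟪α, α⟫) * ∫ x in (0:ℝ)..(⟪ξ, α⟫), mvfun (t α) x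

/-- The critical equation `cξ + ∑_{α>0} v_α(⟨ξ,α⟩) α∨ = 2π(ρ∨+μ)`. -/
def criticalEq (t : V → ℝ) (μ ξ : V) : Prop :=
  c • ξ + ∑ α ∈ D.pos, mvfun (t α) ⟪ξ, α⟫ • coroot α
    = (2 * Real.pi) • (D.rhoVee + μ)

/-- The Hessian bilinear form `H_{η,ζ}(ξ)`. -/
def hessForm (t : V → ℝ) (ξ η ζ : V) : ℝ :=
  c * ⟪η, ζ⟫ + ∑ α ∈ D.R0,
    (1 - t α ^ 2) * ⟪η, α⟫ * ⟪ζ, α⟫ /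
      (⟪α, α⟫ * (1 - 2 * t α * Real.cos ⟪ξ, α⟫ + t α ^ 2))

/-- `κ_± = (2/n) ∑_{α>0} (1-t_α²)/(1 ± |t_α|)²`; here `s = ±1`. -/
def kappaPM (t : V → ℝ) (s : ℝ) : ℝ :=
  (2 / (D.n : ℝ)) * ∑ α ∈ D.pos, (1 - t α ^ 2) / (1 + s * |t α|) ^ 2

end RootSystemData

namespace RootSystemData

section Helpers

variable {V : Type*} [NormedAddCommGroup V] [InnerProductSpace ℝ V]
variable (D : RootSystemData V) (c : ℝ)

theorem inner_coroot_self {α : V} (h : α ≠ 0) : ⟪α, coroot α⟫ = 2 := by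
  have h2 : ⟪α, α⟫ ≠ 0 := by simpa using h
  rw [coroot, inner_smul_right]
  field_simp

theorem coroot_neg' (α : V) : coroot (-α) = -coroot α := by
  simp [coroot]

theorem neg_mem {α : V} (h : α ∈ D.R0) : -α ∈ D.R0 := by
  have := D.reflect_mem α h α h
  rw [inner_coroot_self (D.ne_zero α h)] at this
  convert this using 1
  rw [two_smul]; abel

theorem aval_neg (a : V × ℤ) (x : V) : aval c (-a.1, -a.2) x = - aval c a x := by
  simp [aval, coroot_neg', inner_neg_right]; ring

theorem aval_sAff (a b : V × ℤ) (x : V) :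
    aval c b (sAff c a x) = aval c b x - aval c a x * ⟪a.1, coroot b.1⟫ := by
  simp only [sAff]
  simp only [aval, inner_sub_left, inner_smul_left, conj_trivial]
  ring

theorem aval_sAff_self {a : V × ℤ} (h : D.IsAffRoot a) (x : V) :
    aval c a (sAff c a x) = - aval c a x := by
  rw [aval_sAff, inner_coroot_self (D.ne_zero _ h)]; ring

theorem sAff_sAff {a : V × ℤ} (h : D.IsAffRoot a) (x : V) :
    sAff c a (sAff c a x) = x := by
  rw [sAff, D.aval_sAff_self c h, sAff]; simp

theorem coroot_reflect {α β : V} (hα : α ≠ 0) :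
    coroot (β - ⟪β, coroot α⟫ • α) = coroot β - ⟪α, coroot β⟫ • coroot α := by
  have h2 : ⟪α, α⟫ ≠ 0 := by simpa using hα
  have hn : ⟪β - ⟪β, coroot α⟫ • α, β - ⟪β, coroot α⟫ • α⟫ = ⟪β, β⟫ := by
    simp only [coroot, inner_sub_left, inner_sub_right, inner_smul_left, inner_smul_right,
      real_inner_comm α β]
    simp
    simp only [← real_inner_self_eq_norm_sq]
    field_simp
    ring
  rw [coroot, hn]
  simp only [coroot, smul_sub, smul_smul, inner_smul_right]
  rw [real_inner_comm α β]
  congr 2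
  ring

theorem reflect_root {a b : V × ℤ} (ha : D.IsAffRoot a) (hb : D.IsAffRoot b) :
    ∃ b' : V × ℤ, D.IsAffRoot b' ∧ ∀ x, aval c b' x = aval c b (sAff c a x) := by
  obtain ⟨k, hk⟩ := D.crystallographic b.1 hb a.1 ha
  refine ⟨(b.1 - ⟪b.1, coroot a.1⟫ • a.1, b.2 - k * a.2), D.reflect_mem _ ha _ hb, fun x => ?_⟩
  rw [aval_sAff, aval]
  simp only [coroot_reflect (D.ne_zero _ ha), aval, inner_sub_right, inner_smul_right]
  push_cast
  rw [hk]; ring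

theorem WR_root {w : Equiv.Perm V} (hw : w ∈ D.WR c) :
    ∀ a, D.IsAffRoot a → ∃ b : V × ℤ, D.IsAffRoot b ∧ ∀ x, aval c b x = aval c a (w x) := by
  suffices H : (∀ a, D.IsAffRoot a → ∃ b : V × ℤ, D.IsAffRoot b ∧
      ∀ x, aval c b x = aval c a (w x)) ∧ (∀ a, D.IsAffRoot a → ∃ b : V × ℤ, D.IsAffRoot b ∧
      ∀ x, aval c b x = aval c a (w⁻¹ x)) from H.1
  unfold WR at hw
  induction hw using Subgroup.closure_induction with
  | mem e he =>
    obtain ⟨a, ha, hea⟩ := he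
    have hinv : ∀ x, e⁻¹ x = sAff c a x := fun x => by
      rw [Equiv.Perm.inv_eq_iff_eq, hea, D.sAff_sAff c ha]
    constructor
    · intro b hb
      simpa only [hea] using D.reflect_root c ha hb
    · intro b hb
      simpa only [hinv] using D.reflect_root c ha hb
  | one => exact ⟨fun a ha => ⟨a, ha, fun x => rfl⟩, fun a ha => ⟨a, ha, fun x => by simp⟩⟩
  | mul u v _ _ hu hv =>
    constructor
    · intro a ha
      obtain ⟨b, hb, hb'⟩ := hu.1 a ha
      obtain ⟨d, hd, hd'⟩ := hv.1 b hb
      exact ⟨d, hd, fun x => by rw [hd', hb']; rfl⟩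
    · intro a ha
      obtain ⟨b, hb, hb'⟩ := hv.2 a ha
      obtain ⟨d, hd, hd'⟩ := hu.2 b hb
      exact ⟨d, hd, fun x => by rw [hd', hb', mul_inv_rev]; rfl⟩
  | inv u _ hu => exact ⟨hu.2, by simpa using hu.1⟩

theorem coroot_coroot {α : V} (h : α ≠ 0) : coroot (coroot α) = α := by
  have h2 : ⟪α, α⟫ ≠ 0 := by simpa using h
  simp only [coroot, inner_smul_left, inner_smul_right, smul_smul]
  simp only [conj_trivial]
  have : 2 / (2 / ⟪α, α⟫ * (2 / ⟪α, α⟫ * ⟪α, α⟫)) * (2 / ⟪α, α⟫) = 1 := by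
    field_simp
  rw [this, one_smul]

theorem aval_inj (hc : 0 < c) {a b : V × ℤ} (ha : D.IsAffRoot a) (hb : D.IsAffRoot b)
    (h : ∀ x, aval c a x = aval c b x) : a = b := by
  have h0 := h 0
  simp only [aval, inner_zero_left, zero_add] at h0
  have h2 : a.2 = b.2 := by
    have := mul_right_cancel₀ hc.ne' h0
    exact_mod_cast this
  have h1 : coroot a.1 = coroot b.1 := by
    refine ext_inner_left ℝ fun v => ?_
    have := h v
    simp only [aval] at this
    rw [h0] at this
    linarith
  refine Prod.ext ?_ h2
  rw [← coroot_coroot (D.ne_zero _ ha), h1, coroot_coroot (D.ne_zero _ hb)]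

theorem exists_dom : ∃ p : V, ∀ α ∈ D.pos, 0 < ⟪p, α⟫ := by
  have : FiniteDimensional ℝ V :=
    FiniteDimensional.of_finrank_pos (by rw [D.rank_eq]; exact D.n_pos)
  have hpos : ∀ α ∈ D.pos, α ∈ Submodule.span ℝ (Set.range D.simpleRoot) := by
    intro α hα
    obtain ⟨k, hk⟩ := D.pos_natCombo α hα
    rw [hk]
    exact Submodule.sum_mem _ fun j _ => Submodule.smul_mem _ _
      (Submodule.subset_span ⟨j, rfl⟩)
  have hsp : ⊤ ≤ Submodule.span ℝ (Set.range D.simpleRoot) := by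
    rw [← D.span_top, Submodule.span_le]
    intro α hα
    rcases D.pos_or_neg α hα with h | h
    · exact hpos _ h
    · simpa using Submodule.neg_mem _ (hpos _ h)
  have hli : LinearIndependent ℝ D.simpleRoot :=
    linearIndependent_of_top_le_span_of_card_eq_finrank hsp (by simp [D.rank_eq])
  let B := Module.Basis.mk hli hsp
  let f : V →ₗ[ℝ] ℝ := B.constr ℝ (fun _ => (1 : ℝ))
  let p := (InnerProductSpace.toDual ℝ V).symm (LinearMap.toContinuousLinearMap f)
  have hp : ∀ v, ⟪p, v⟫ = f v := fun v => by
    simp [p, InnerProductSpace.toDual_symm_apply]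
  have hf : ∀ j, f (D.simpleRoot j) = 1 := fun j => by
    have : B j = D.simpleRoot j := by simp [B]
    rw [← this]; simp [f]
  refine ⟨p, fun α hα => ?_⟩
  obtain ⟨k, hk⟩ := D.pos_natCombo α hα
  have hα0 := D.ne_zero α (D.pos_subset hα)
  rw [hp]
  have hfa : f α = ∑ j, (k j : ℝ) := by
    rw [hk, map_sum]; simp [hf]
  rw [hfa]
  refine lt_of_le_of_ne (Finset.sum_nonneg fun j _ => Nat.cast_nonneg _) fun h0 => hα0 ?_
  have := (Finset.sum_eq_zero_iff_of_nonneg (fun j _ => Nat.cast_nonneg (k j))).1 h0.symm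
  rw [hk]
  exact Finset.sum_eq_zero fun j hj => by rw [this j hj, zero_smul]

theorem exists_small (hc : 0 < c) : ∃ p : V, (∀ α ∈ D.pos, 0 < ⟪p, coroot α⟫) ∧
    ∀ α ∈ D.R0, |⟪p, coroot α⟫| < c := by
  obtain ⟨p, hp⟩ := D.exists_dom
  set M : ℝ := ∑ α ∈ D.R0, |⟪p, coroot α⟫| with hM
  have hM0 : 0 ≤ M := Finset.sum_nonneg fun _ _ => abs_nonneg _
  have ht : 0 < c / (M + 1) := by positivity
  refine ⟨(c / (M + 1)) • p, fun α hα => ?_, fun α hα => ?_⟩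
  · have h2 : 0 < ⟪α, α⟫ := real_inner_self_pos.2 (D.ne_zero α (D.pos_subset hα))
    have := hp α hα
    rw [coroot, inner_smul_left, inner_smul_right]
    simp only [conj_trivial]
    positivity
  · have hle : |⟪p, coroot α⟫| ≤ M :=
      Finset.single_le_sum (f := fun α => |⟪p, coroot α⟫|) (fun _ _ => abs_nonneg _) hα
    rw [inner_smul_left, abs_mul]
    simp only [conj_trivial]
    rw [abs_of_pos ht]
    calc c / (M + 1) * |⟪p, coroot α⟫| ≤ c / (M + 1) * M := by gcongr
      _ < c := by rw [div_mul_eq_mul_div, div_lt_iff₀ (by positivity)]; nlinarith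

/-- `p` is a base point in the open fundamental alcove. -/
def IsBase (p : V) : Prop := ∀ a : V × ℤ, D.IsAffRoot a →
  (0 < aval c a p → D.IsAffPos a) ∧ (D.IsAffPos a → 0 < aval c a p) ∧ aval c a p ≠ 0

theorem exists_base (hc : 0 < c) : ∃ p : V, D.IsBase c p := by
  obtain ⟨p, hp, hs⟩ := D.exists_small c hc
  refine ⟨p, ?_⟩
  have key : ∀ a : V × ℤ, D.IsAffPos a → 0 < aval c a p := by
    rintro ⟨α, r⟩ ⟨h, h1 | ⟨h2, h3⟩⟩
    · have := (abs_lt.1 (hs _ h)).1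
      have h1' : (1 : ℝ) ≤ r := by exact_mod_cast h1
      simp only [aval] at *
      nlinarith
    · simp only at h2 h3
      simp only [aval, h2]
      simpa using hp _ h3
  have dich : ∀ a : V × ℤ, D.IsAffRoot a → D.IsAffPos a ∨ D.IsAffPos (-a.1, -a.2) := by
    rintro ⟨α, r⟩ h
    rcases lt_trichotomy r 0 with h1 | h1 | h1
    · exact Or.inr ⟨D.neg_mem h, Or.inl (by simp only; omega)⟩
    · subst h1
      rcases D.pos_or_neg α h with h2 | h2
      · exact Or.inl ⟨h, Or.inr ⟨rfl, h2⟩⟩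
      · exact Or.inr ⟨D.neg_mem h, Or.inr ⟨by simp, h2⟩⟩
    · exact Or.inl ⟨h, Or.inl (by simp only; omega)⟩
  intro a ha
  rcases dich a ha with h | h
  · exact ⟨fun _ => h, key a, (key a h).ne'⟩
  · have := key _ h
    rw [aval_neg] at this
    exact ⟨fun h' => by linarith, key a, by linarith⟩

variable {D c}

theorem IsBase.neg_iff {p : V} (hp : D.IsBase c p) {a : V × ℤ} (ha : D.IsAffRoot a) :
    D.IsAffNeg a ↔ aval c a p < 0 := by
  have := hp (-a.1, -a.2) (D.neg_mem ha)
  rw [aval_neg] at this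
  exact ⟨fun h => by linarith [this.2.1 h], fun h => this.1 (by linarith)⟩

theorem IsBase.RW_eq {p : V} (hp : D.IsBase c p) {w : Equiv.Perm V} (hw : w ∈ D.WR c) :
    D.RW c w = {b | D.IsAffRoot b ∧ 0 < aval c b p ∧ aval c b (w⁻¹ p) < 0} := by
  ext b
  constructor
  · rintro ⟨h, d, hd, hbd⟩
    have hd1 : D.IsAffRoot d := by simpa [IsAffRoot] using D.neg_mem hd.1
    refine ⟨h.1, (hp b h.1).2.1 h, ?_⟩
    rw [hbd]
    exact (hp.neg_iff hd1).1 hd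
  · rintro ⟨h, h1, h2⟩
    obtain ⟨d, hd, hd'⟩ := D.WR_root c (inv_mem hw) b h
    exact ⟨(hp b h).1 h1, d, (hp.neg_iff hd).2 (by rw [hd']; exact h2), fun x => (hd' x).symm⟩

theorem IsBase.ne_zero {p : V} (hp : D.IsBase c p) {w : Equiv.Perm V} (hw : w ∈ D.WR c)
    {a : V × ℤ} (ha : D.IsAffRoot a) : aval c a (w⁻¹ p) ≠ 0 := by
  obtain ⟨d, hd, hd'⟩ := D.WR_root c (inv_mem hw) a ha
  rw [← hd']
  exact (hp d hd).2.2

theorem finite_sep (hc : 0 < c) (p q : V) :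
    {b : V × ℤ | D.IsAffRoot b ∧ 0 < aval c b p ∧ aval c b q < 0}.Finite := by
  have : {b : V × ℤ | D.IsAffRoot b ∧ 0 < aval c b p ∧ aval c b q < 0} ⊆
      ⋃ α ∈ (D.R0 : Set V), (fun r : ℤ => (α, r)) ''
        Set.Icc ⌊-⟪p, coroot α⟫ / c⌋ ⌈-⟪q, coroot α⟫ / c⌉ := by
    rintro ⟨α, r⟩ ⟨h, h1, h2⟩
    simp only [Set.mem_iUnion]
    refine ⟨α, h, r, ⟨?_, ?_⟩, rfl⟩
    · simp only [aval] at h1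
      have : -⟪p, coroot α⟫ / c ≤ r := by rw [div_le_iff₀ hc]; linarith
      exact_mod_cast (Int.floor_le _).trans this
    · simp only [aval] at h2
      have : (r : ℝ) ≤ -⟪q, coroot α⟫ / c := by rw [le_div_iff₀ hc]; linarith
      exact_mod_cast this.trans (Int.le_ceil _)
  refine Set.Finite.subset ?_ this
  exact D.R0.finite_toSet.biUnion fun α _ => (Set.finite_Icc _ _).image _

theorem sep_lt (hc : 0 < c) {p q : V} (hp : D.IsBase c p) {a : V × ℤ} (ha : D.IsAffRoot a)
    (hap : 0 < aval c a p) (haq : aval c a q < 0) :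
    {b : V × ℤ | D.IsAffRoot b ∧ 0 < aval c b p ∧ aval c b (sAff c a q) < 0}.ncard <
    {b : V × ℤ | D.IsAffRoot b ∧ 0 < aval c b p ∧ aval c b q < 0}.ncard := by
  have hσ : ∀ b : V × ℤ, ∃ b' : V × ℤ, D.IsAffRoot b →
      (D.IsAffRoot b' ∧ ∀ x, aval c b' x = aval c b (sAff c a x)) := fun b => by
    by_cases hb : D.IsAffRoot b
    · obtain ⟨b', h⟩ := D.reflect_root c ha hb
      exact ⟨b', fun _ => h⟩
    · exact ⟨b, fun h => absurd h hb⟩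
  choose σ hσ using hσ
  have hinv : ∀ b, D.IsAffRoot b → σ (σ b) = b := fun b hb => by
    have h1 := hσ b hb
    have h2 := hσ (σ b) h1.1
    refine D.aval_inj c hc h2.1 hb fun x => ?_
    rw [h2.2, h1.2, D.sAff_sAff c ha]
  have hN := finite_sep (D := D) hc p q
  have hmem : a ∈ {b : V × ℤ | D.IsAffRoot b ∧ 0 < aval c b p ∧ aval c b q < 0} :=
    ⟨ha, hap, haq⟩
  refine lt_of_le_of_lt ?_ (Set.ncard_sdiff_singleton_lt_of_mem hmem hN)
  refine Set.ncard_le_ncard_of_injOn (fun b => if 0 < aval c (σ b) p then σ b else b)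
    ?_ ?_ (hN.subset Set.sdiff_subset)
  · rintro b ⟨hb, hbp, hbq⟩
    have h1 := hσ b hb
    split_ifs with h
    · refine ⟨⟨h1.1, h, by rw [h1.2]; exact hbq⟩, fun hba => ?_⟩
      have hba' : σ b = a := hba
      have h3 := h1.2 (sAff c a p)
      rw [D.sAff_sAff c ha, hba', D.aval_sAff_self c ha] at h3
      linarith
    · have h2 : aval c (σ b) p < 0 := lt_of_le_of_ne (not_lt.1 h) (hp _ h1.1).2.2
      rw [h1.2, aval_sAff] at h2
      have hk : 0 < ⟪a.1, coroot b.1⟫ := by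
        by_contra hk
        push Not at hk
        nlinarith
      refine ⟨⟨hb, hbp, ?_⟩, fun hba => ?_⟩
      · rw [aval_sAff] at hbq
        nlinarith
      · have hba' : b = a := hba
        rw [hba', D.aval_sAff_self c ha] at hbq
        linarith
  · rintro b ⟨hb, hbp, hbq⟩ b' ⟨hb', hbp', hbq'⟩ heq
    dsimp only at heq
    split_ifs at heq with h h' h'
    · rw [← hinv b hb, heq, hinv b' hb']
    · exact absurd (by rw [← heq, hinv b hb]; exact hbp) h'
    · exact absurd (by rw [heq, hinv b' hb']; exact hbp') h
    · exact heq

/-- The affine reflection as a permutation. -/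
def sPerm {D : RootSystemData V} (c : ℝ) {a : V × ℤ} (ha : D.IsAffRoot a) : Equiv.Perm V :=
  Function.Involutive.toPerm (sAff c a) (D.sAff_sAff c ha)

theorem sPerm_mem {a : V × ℤ} (ha : D.IsAffRoot a) : sPerm c ha ∈ D.WR c :=
  Subgroup.subset_closure ⟨a, ha, fun _ => rfl⟩

theorem sPerm_inv {a : V × ℤ} (ha : D.IsAffRoot a) : (sPerm c ha)⁻¹ = sPerm c ha := by
  ext x
  rw [Equiv.Perm.inv_eq_iff_eq]
  exact (D.sAff_sAff c ha x).symm

theorem sPerm_mul {a : V × ℤ} (ha : D.IsAffRoot a) : sPerm c ha * sPerm c ha = 1 := by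
  nth_rewrite 1 [← sPerm_inv ha]
  simp

theorem len_lt (hc : 0 < c) {p : V} (hp : D.IsBase c p) {w : Equiv.Perm V} (hw : w ∈ D.WR c)
    {a : V × ℤ} (ha : D.IsAffRoot a) (hap : 0 < aval c a p) (haw : aval c a (w⁻¹ p) < 0) :
    D.len c (w * sPerm c ha) < D.len c w := by
  rw [len, len, hp.RW_eq hw, hp.RW_eq (mul_mem hw (sPerm_mem ha))]
  have : (w * sPerm c ha)⁻¹ p = sAff c a (w⁻¹ p) := by
    rw [mul_inv_rev, sPerm_inv]; rfl
  rw [this]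
  exact sep_lt hc hp ha hap haw

theorem step_down (hc : 0 < c) {p : V} (hp : D.IsBase c p) {w : Equiv.Perm V} (hw : w ∈ D.WR c)
    {a : V × ℤ} (ha : D.IsAffRoot a) (hap : 0 < aval c a p) (haw : aval c a (w⁻¹ p) < 0) :
    D.bruhatStep c (w * sPerm c ha) w :=
  ⟨a, (hp a ha).1 hap, sPerm c ha, fun _ => rfl, by rw [mul_assoc, sPerm_mul, mul_one],
    len_lt hc hp hw ha hap haw⟩

/-- A Bruhat step is right multiplication by a reflection in a negative direction. -/
theorem step_elim (hc : 0 < c) {p : V} (hp : D.IsBase c p) {w w' : Equiv.Perm V}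
    (hw' : w' ∈ D.WR c) (h : D.bruhatStep c w w') :
    ∃ a : V × ℤ, ∃ ha : D.IsAffRoot a, D.IsAffPos a ∧ w = w' * sPerm c ha ∧
      aval c a (w'⁻¹ p) < 0 := by
  obtain ⟨a, ha, e, he, rfl, hl⟩ := h
  have har : D.IsAffRoot a := ha.1
  have hes : e = sPerm c har := Equiv.ext he
  subst hes
  have hw : w ∈ D.WR c := by
    have := mul_mem hw' (sPerm_mem (c := c) har)
    rwa [mul_assoc, sPerm_mul, mul_one] at this
  refine ⟨a, har, ha, by rw [mul_assoc, sPerm_mul, mul_one], ?_⟩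
  by_contra hcon
  have h2 : (w * sPerm c har)⁻¹ p = sAff c a (w⁻¹ p) := by
    rw [mul_inv_rev, sPerm_inv]; rfl
  have h3 := hp.ne_zero hw har
  rw [h2, D.aval_sAff_self c har] at hcon
  have h4 : aval c a (w⁻¹ p) < 0 := lt_of_le_of_ne (by linarith) h3
  exact absurd hl (not_lt.2 (len_lt hc hp hw har ((hp a har).2.1 ha) h4).le)

theorem sign_le {p : V} (hp : D.IsBase c p) {w : Equiv.Perm V} (hw : w ∈ D.WR c) {z : V}
    (hz : w z ∈ D.alcove c) {a : V × ℤ} (ha : D.IsAffRoot a) (h : aval c a (w⁻¹ p) < 0) :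
    aval c a z ≤ 0 := by
  obtain ⟨d, hd, hd'⟩ := D.WR_root c (inv_mem hw) a ha
  rw [← hd'] at h
  have := hz _ ((hp.neg_iff hd).2 h)
  rw [aval_neg, hd'] at this
  simp at this
  exact this

theorem sign_lt {p : V} (hp : D.IsBase c p) {w : Equiv.Perm V} (hw : w ∈ D.WR c) {z : V}
    (hz : w z ∈ D.alcove c) {a : V × ℤ} (ha : D.IsAffRoot a) (h : aval c a z < 0) :
    aval c a (w⁻¹ p) < 0 := by
  obtain ⟨d, hd, hd'⟩ := D.WR_root c (inv_mem hw) a ha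
  rw [← hd']
  refine lt_of_le_of_ne (not_lt.1 fun hcon => ?_) (hp d hd).2.2
  have := hz _ ((hp d hd).1 hcon)
  rw [hd'] at this
  simp at this
  linarith

theorem RW_of_no_wall {p : V} (hp : D.IsBase c p) {w : Equiv.Perm V} (hw : w ∈ D.WR c) {z : V}
    (hz : w z ∈ D.alcove c)
    (hno : ∀ a, D.IsAffRoot a → 0 < aval c a p → aval c a z = 0 → ¬ aval c a (w⁻¹ p) < 0) :
    D.RW c w = {b | D.IsAffRoot b ∧ 0 < aval c b p ∧ aval c b z < 0} := by
  rw [hp.RW_eq hw]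
  ext b
  constructor
  · rintro ⟨h, h1, h2⟩
    exact ⟨h, h1, lt_of_le_of_ne (sign_le hp hw hz h h2) fun h0 => hno b h h1 h0 h2⟩
  · rintro ⟨h, h1, h2⟩
    exact ⟨h, h1, sign_lt hp hw hz h h2⟩

theorem sAff_of_zero {a : V × ℤ} {z : V} (h : aval c a z = 0) : sAff c a z = z := by
  simp [sAff, h]

theorem wmin_le (hc : 0 < c) {p : V} (hp : D.IsBase c p) {wmin : V → Equiv.Perm V}
    (hwmin : D.IsWmin c wmin) (z : V) (n : ℕ) : ∀ w : Equiv.Perm V, D.len c w = n →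
    w ∈ D.WR c → w z ∈ D.alcove c →
    wmin z z = w z ∧ D.bruhatLE c (wmin z) w := by
  induction n using Nat.strong_induction_on with
  | _ n ih =>
  intro w hn hw hz
  obtain ⟨hm, hmz, hmin⟩ := hwmin z
  by_cases hno : ∀ a, D.IsAffRoot a → 0 < aval c a p → aval c a z = 0 → ¬ aval c a (w⁻¹ p) < 0
  · have h1 := RW_of_no_wall hp hw hz hno
    have h2 := RW_of_no_wall hp hm hmz (fun a ha hap haz haw => by
      have hl := len_lt hc hp hm ha hap haw
      rcases hmin (wmin z * sPerm c ha) (mul_mem hm (sPerm_mem ha)) (by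
        change wmin z (sAff c a z) ∈ _
        rw [sAff_of_zero haz]; exact hmz) with h | h
      · omega
      · rw [h] at hl; omega)
    rcases hmin w hw hz with h | h
    · rw [len, len, h1, h2] at h; omega
    · rw [h]; exact ⟨rfl, Relation.ReflTransGen.refl⟩
  · push Not at hno
    obtain ⟨a, ha, hap, haz, haw⟩ := hno
    have hwz : (w * sPerm c ha) z = w z := by
      change w (sAff c a z) = w z
      rw [sAff_of_zero haz]
    obtain ⟨h1, h2⟩ := ih _ (by rw [← hn]; exact len_lt hc hp hw ha hap haw)
      (w * sPerm c ha) rfl (mul_mem hw (sPerm_mem ha)) (by rw [hwz]; exact hz)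
    exact ⟨h1.trans hwz, h2.tail (step_down hc hp hw ha hap haw)⟩

theorem bruhat_len {w w' : Equiv.Perm V} (h : D.bruhatLE c w w') :
    w = w' ∨ D.len c w < D.len c w' := by
  induction h with
  | refl => exact Or.inl rfl
  | tail _ hs ih =>
    obtain ⟨_, _, _, _, _, hl⟩ := hs
    rcases ih with rfl | ih
    · exact Or.inr hl
    · exact Or.inr (ih.trans hl)

theorem len_one {p : V} (hp : D.IsBase c p) : D.len c 1 = 0 := by
  rw [len, hp.RW_eq (one_mem _)]
  convert Set.ncard_empty (V × ℤ)
  ext b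
  simp only [Set.mem_ofPred_eq, Set.mem_empty_iff_false, iff_false]
  rintro ⟨_, h1, h2⟩
  simp at h2
  linarith

theorem eq_one_of_no_inv {p : V} (hp : D.IsBase c p) {wmin : V → Equiv.Perm V}
    (hwmin : D.IsWmin c wmin) (hc : 0 < c) {w : Equiv.Perm V} (hw : w ∈ D.WR c)
    (h : ∀ a, D.IsAffRoot a → 0 < aval c a p → ¬ aval c a (w⁻¹ p) < 0) : w = 1 := by
  have h0 : (0 : V) ∈ D.alcove c := by
    rintro a ⟨_, h1 | h1⟩
    · have : (0 : ℝ) ≤ a.2 := by exact_mod_cast (by omega : 0 ≤ a.2)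
      simp only [aval, inner_zero_left, zero_add]; positivity
    · simp [aval, h1.1]
  have hlw : D.len c w = 0 := by
    rw [len, hp.RW_eq hw]
    convert Set.ncard_empty (V × ℤ)
    ext b
    simp only [Set.mem_ofPred_eq, Set.mem_empty_iff_false, iff_false]
    rintro ⟨h0, h1, h2⟩
    exact h b h0 h1 h2
  have hz : w 0 ∈ D.alcove c := by
    intro b hb
    obtain ⟨d, hd, hd'⟩ := D.WR_root c hw b hb.1
    rw [← hd']
    have hbp := (hp b hb.1).2.1 hb
    refine h0 d ((hp d hd).1 ?_)
    by_contra hcon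
    have hneg : aval c d p < 0 := lt_of_le_of_ne (not_lt.1 hcon) (hp d hd).2.2
    have h4 := h (-d.1, -d.2) (D.neg_mem hd) (by rw [aval_neg]; linarith)
    rw [aval_neg, hd'] at h4
    simp at h4
    linarith
  obtain ⟨_, _, hmin⟩ := hwmin 0
  rcases hmin w hw hz with h | h
  · omega
  · rcases hmin 1 (one_mem _) (by simpa using h0) with h' | h'
    · rw [len_one hp] at h'; omega
    · rw [h, h']

theorem one_le (hc : 0 < c) {p : V} (hp : D.IsBase c p) {wmin : V → Equiv.Perm V}
    (hwmin : D.IsWmin c wmin) (n : ℕ) : ∀ w : Equiv.Perm V, D.len c w = n →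
    w ∈ D.WR c → D.bruhatLE c 1 w := by
  induction n using Nat.strong_induction_on with
  | _ n ih =>
  intro w hn hw
  by_cases h : ∀ a, D.IsAffRoot a → 0 < aval c a p → ¬ aval c a (w⁻¹ p) < 0
  · rw [eq_one_of_no_inv hp hwmin hc hw h]; exact Relation.ReflTransGen.refl
  · push Not at h
    obtain ⟨a, ha, hap, haw⟩ := h
    exact (ih _ (by rw [← hn]; exact len_lt hc hp hw ha hap haw) _ rfl
      (mul_mem hw (sPerm_mem ha))).tail (step_down hc hp hw ha hap haw)

theorem wmin_plus (hc : 0 < c) {p : V} (hp : D.IsBase c p) {wmin : V → Equiv.Perm V}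
    (hwmin : D.IsWmin c wmin) {q : V} (hq : q ∈ D.alcove c) : wmin q = 1 := by
  have h := (wmin_le hc hp hwmin q _ 1 rfl (one_mem _) hq).2
  rcases bruhat_len h with h | h
  · exact h
  · rw [len_one hp] at h; omega

theorem plus_vle (hc : 0 < c) {p : V} (hp : D.IsBase c p) {wmin : V → Equiv.Perm V}
    (hwmin : D.IsWmin c wmin) {z q : V} (hq : wmin z z = q) : D.vle c wmin q z := by
  have h1 := wmin_plus hc hp hwmin (q := q) (hq ▸ (hwmin z).2.1)
  refine ⟨by rw [h1, hq]; rfl, ?_⟩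
  rw [h1]
  exact one_le hc hp hwmin _ _ rfl (hwmin z).1

theorem mem_interval (hc : 0 < c) {p : V} (hp : D.IsBase c p) {wmin : V → Equiv.Perm V}
    (hwmin : D.IsWmin c wmin) (y : V) : y ∈ D.vInterval c wmin (wmin y y) y :=
  ⟨plus_vle hc hp hwmin rfl, rfl, Relation.ReflTransGen.refl⟩

theorem reflect_interval (hc : 0 < c) {p : V} (hp : D.IsBase c p) {wmin : V → Equiv.Perm V}
    (hwmin : D.IsWmin c wmin) {y z : V} (hz : z ∈ D.vInterval c wmin (wmin y y) y)
    {a : V × ℤ} (ha : D.IsAffPos a) (haz : aval c a z < 0) :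
    sAff c a z ∈ D.vInterval c wmin (wmin y y) y := by
  obtain ⟨_, hzy, hle⟩ := hz
  obtain ⟨hm, hmz, _⟩ := hwmin z
  have har : D.IsAffRoot a := ha.1
  have heq : (wmin z * sPerm c har) (sAff c a z) = wmin z z := by
    change wmin z (sAff c a (sAff c a z)) = _
    rw [D.sAff_sAff c har]
  obtain ⟨h1, h2⟩ := wmin_le hc hp hwmin (sAff c a z) _ (wmin z * sPerm c har) rfl
    (mul_mem hm (sPerm_mem har)) (by rw [heq]; exact hmz)
  have h3 := (h1.trans heq).trans hzy
  refine ⟨plus_vle hc hp hwmin h3, h3, ?_⟩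
  exact (h2.tail (step_down hc hp hm har ((hp a har).2.1 ha) (sign_lt hp hm hmz har haz))).trans hle

/-- Descent: a set closed under downward reflections contains the interval below its points. -/
theorem interval_subset (hc : 0 < c) {p : V} (hp : D.IsBase c p) {wmin : V → Equiv.Perm V}
    (hwmin : D.IsWmin c wmin) (C : Set V)
    (hC : ∀ z ∈ C, ∀ a, D.IsAffPos a → aval c a z ≤ 0 → sAff c a z ∈ C) {y : V} (hy : y ∈ C) :
    D.vInterval c wmin (wmin y y) y ⊆ C := by
  rintro z ⟨_, hzy, hle⟩
  have key : wmin z ∈ D.WR c ∧ (wmin z)⁻¹ (wmin y y) ∈ C := by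
    refine Relation.ReflTransGen.head_induction_on
      (motive := fun w _ => w ∈ D.WR c ∧ w⁻¹ (wmin y y) ∈ C) hle ⟨(hwmin y).1, by simpa using hy⟩ ?_
    rintro u v hs _ ⟨hv, hvC⟩
    obtain ⟨a, har, ha, rfl, hav⟩ := step_elim hc hp hv hs
    refine ⟨mul_mem hv (sPerm_mem har), ?_⟩
    have : (v * sPerm c har)⁻¹ (wmin y y) = sAff c a (v⁻¹ (wmin y y)) := by
      rw [mul_inv_rev, sPerm_inv]; rfl
    rw [this]
    exact hC _ hvC a ha (sign_le hp hv (by simpa using (hwmin y).2.1) har hav)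
  have := key.2
  rw [← hzy] at this
  simpa using this

theorem add_smul_mem {C : Set V} (hC : Convex ℝ C) {x v : V} {δ ε : ℝ} (hx : x ∈ C)
    (h : x + δ • v ∈ C) (h0 : 0 ≤ ε) (h1 : ε ≤ δ) : x + ε • v ∈ C := by
  rcases h0.eq_or_lt with rfl | hε
  · simpa using hx
  have hδ : 0 < δ := hε.trans_le h1
  have := hC.add_smul_mem hx h (t := ε / δ) ⟨by positivity, by rw [div_le_one hδ]; exact h1⟩
  rwa [smul_smul, div_mul_cancel₀ _ hδ.ne'] at this

theorem sAff_eq (a : V × ℤ) (x : V) : sAff c a x = x + (-aval c a x) • a.1 := by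
  rw [sAff, neg_smul, sub_eq_add_neg]

theorem aval_combo {a : V × ℤ} {x y : V} {s t : ℝ} (h : s + t = 1) :
    aval c a (s • x + t • y) = s * aval c a x + t * aval c a y := by
  simp only [aval, inner_add_left, inner_smul_left, conj_trivial]
  linear_combination (- (a.2 * c : ℝ)) * h

theorem hull_closed (S : Set V) {a : V × ℤ}
    (hS : ∀ z ∈ S, aval c a z < 0 → sAff c a z ∈ S) {x : V} (hx : x ∈ convexHull ℝ S)
    (hax : aval c a x ≤ 0) : sAff c a x ∈ convexHull ℝ S := by
  set C := convexHull ℝ S with hCdef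
  have hC : Convex ℝ C := convex_convexHull ℝ S
  have key : C ⊆ {x | ∃ δ : ℝ, 0 ≤ δ ∧ -aval c a x ≤ δ ∧ x ∈ C ∧ x + δ • a.1 ∈ C} := by
    refine convexHull_min ?_ ?_
    · intro z hz
      have hzC : z ∈ C := subset_convexHull ℝ S hz
      rcases lt_or_ge (aval c a z) 0 with h | h
      · refine ⟨-aval c a z, by linarith, le_rfl, hzC, ?_⟩
        rw [← sAff_eq]
        exact subset_convexHull ℝ S (hS z hz h)
      · exact ⟨0, le_rfl, by linarith, hzC, by simpa using hzC⟩
    · rintro u ⟨δ, h1, h2, h3, h4⟩ v ⟨ε, k1, k2, k3, k4⟩ s t hs ht hst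
      refine ⟨s * δ + t * ε, by positivity, ?_, hC h3 k3 hs ht hst, ?_⟩
      · rw [aval_combo hst]
        nlinarith
      · have := hC h4 k4 hs ht hst
        convert this using 1
        module
  obtain ⟨δ, _, h2, h3, h4⟩ := key hx
  rw [sAff_eq]
  exact add_smul_mem hC h3 h4 (by linarith) h2

theorem orbit_closed (hc : 0 < c) (y : V) {z : V}
    (hz : z ∈ convexHull ℝ ((fun w : Equiv.Perm V => w y) '' (D.W0 : Set (Equiv.Perm V))))
    {a : V × ℤ} (ha : D.IsAffPos a) (haz : aval c a z ≤ 0) :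
    sAff c a z ∈ convexHull ℝ ((fun w : Equiv.Perm V => w y) '' (D.W0 : Set (Equiv.Perm V))) := by
  set S := (fun w : Equiv.Perm V => w y) '' (D.W0 : Set (Equiv.Perm V)) with hS
  have hr : ∀ x, sAff c (a.1, 0) x = x - ⟪x, coroot a.1⟫ • a.1 := fun x => by simp [sAff, aval]
  have h0 : D.IsAffRoot (a.1, 0) := ha.1
  have hmem : sPerm c h0 ∈ D.W0 := Subgroup.subset_closure ⟨a.1, ha.1, hr⟩
  have hSs : ∀ u ∈ S, sAff c (a.1, 0) u ∈ S := by
    rintro _ ⟨w, hw, rfl⟩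
    exact ⟨sPerm c h0 * w, mul_mem hmem hw, rfl⟩
  have hr2 : (0 : ℝ) ≤ a.2 := by
    have : 0 ≤ a.2 := by rcases ha.2 with h | h <;> omega
    exact_mod_cast this
  have hle : aval c (a.1, 0) z ≤ aval c a z := by
    simp only [aval]
    have : 0 ≤ (a.2 : ℝ) * c := by positivity
    simpa using this
  have h1 := hull_closed S (a := (a.1, 0)) (fun u hu _ => hSs u hu) hz (hle.trans haz)
  rw [sAff_eq] at h1 ⊢
  exact add_smul_mem (convex_convexHull ℝ S) hz h1 (by linarith) (by linarith)

theorem W0_norm {w : Equiv.Perm V} (hw : w ∈ D.W0) : ∀ y : V, ‖w y‖ = ‖y‖ := by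
  unfold W0 at hw
  induction hw using Subgroup.closure_induction with
  | mem e he =>
    obtain ⟨α, hα, h⟩ := he
    intro y
    have h2 : ⟪α, α⟫ ≠ 0 := by simpa using D.ne_zero α hα
    rw [h, ← sq_eq_sq₀ (norm_nonneg _) (norm_nonneg _), ← real_inner_self_eq_norm_sq,
      ← real_inner_self_eq_norm_sq]
    simp only [coroot, inner_sub_left, inner_sub_right, inner_smul_left, inner_smul_right,
      conj_trivial]
    rw [real_inner_comm α y]
    field_simp
    ring
  | one => intro y; rfl
  | mul u v _ _ hu hv => intro y; rw [Equiv.Perm.mul_apply, hu, hv]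
  | inv u _ hu => intro y; rw [← hu (u⁻¹ y)]; simp

theorem mem_of_extreme {S : Set V} {x : V} (hS : ∀ s ∈ S, ‖s‖ ≤ ‖x‖)
    (hx : x ∈ convexHull ℝ S) : x ∈ S := by
  by_contra hcon
  have : convexHull ℝ S ⊆ {s | ⟪x, s⟫ < ‖x‖ ^ 2} := by
    refine convexHull_min ?_ ?_
    · intro s hs
      by_contra h
      simp only [Set.mem_ofPred_eq, not_lt] at h
      have h1 := hS s hs
      have h2 := norm_sub_sq_real x s
      have h3 : ‖s‖ ^ 2 ≤ ‖x‖ ^ 2 := by gcongr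
      have h4 : ‖x - s‖ ^ 2 = 0 := le_antisymm (by linarith) (sq_nonneg _)
      have h5 : x = s := by
        rw [sq_eq_zero_iff, norm_eq_zero] at h4
        exact sub_eq_zero.1 h4
      exact hcon (h5 ▸ hs)
    · exact convex_halfSpace_lt (f := fun s => ⟪x, s⟫)
        ⟨fun u v => inner_add_right _ _ _, fun t u => by simp [inner_smul_right]⟩ _
  have := this hx
  simp at this

end Helpers

end RootSystemData

open RootSystemData in
/-- properties of the convex hulls of Bruhat intervals `[x₊, x]` in `V`:
(i) `Conv [y₊, y] ⊆ Conv (W₀ y)`; (ii) `Conv [x₊, x] = Conv [y₊, y] → x = y`;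
(iii) `x ∈ Conv [y₊, y] → Conv [x₊, x] ⊆ Conv [y₊, y]`. -/
theorem statement4 {V : Type*} [NormedAddCommGroup V] [InnerProductSpace ℝ V]
    (D : RootSystemData V) (c : ℝ) (hc : 0 < c)
    (wmin : V → Equiv.Perm V) (hwmin : D.IsWmin c wmin) (x y : V) :
    (convexHull ℝ (D.vInterval c wmin ((wmin y) y) y)
      ⊆ convexHull ℝ ((fun w : Equiv.Perm V => w y) '' (D.W0 : Set (Equiv.Perm V)))) ∧
    (convexHull ℝ (D.vInterval c wmin ((wmin x) x) x)
        = convexHull ℝ (D.vInterval c wmin ((wmin y) y) y) → x = y) ∧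
    (x ∈ convexHull ℝ (D.vInterval c wmin ((wmin y) y) y) →
      convexHull ℝ (D.vInterval c wmin ((wmin x) x) x)
        ⊆ convexHull ℝ (D.vInterval c wmin ((wmin y) y) y)) := by
  obtain ⟨p, hp⟩ := D.exists_base c hc
  have hi : ∀ y : V, D.vInterval c wmin ((wmin y) y) y ⊆
      convexHull ℝ ((fun w : Equiv.Perm V => w y) '' (D.W0 : Set (Equiv.Perm V))) := fun y =>
    interval_subset hc hp hwmin _ (fun z hz a ha haz => orbit_closed hc y hz ha haz)
      (subset_convexHull ℝ _ ⟨1, one_mem D.W0, rfl⟩)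
  have hnorm : ∀ y z : V, z ∈ convexHull ℝ (D.vInterval c wmin ((wmin y) y) y) →
      ‖z‖ ≤ ‖y‖ := fun y z hz => by
    have h1 : convexHull ℝ ((fun w : Equiv.Perm V => w y) '' (D.W0 : Set (Equiv.Perm V))) ⊆
        Metric.closedBall 0 ‖y‖ := by
      refine convexHull_min ?_ (convex_closedBall _ _)
      rintro _ ⟨w, hw, rfl⟩
      simp [W0_norm hw y]
    have h2 := h1 (convexHull_min (hi y) (convex_convexHull ℝ _) hz)
    simpa using h2
  have hself : ∀ y : V, y ∈ convexHull ℝ (D.vInterval c wmin ((wmin y) y) y) := fun y =>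
    subset_convexHull ℝ _ (mem_interval hc hp hwmin y)
  refine ⟨convexHull_min (hi y) (convex_convexHull ℝ _), fun heq => ?_, fun hx => ?_⟩
  · have hxy : x ∈ convexHull ℝ (D.vInterval c wmin ((wmin y) y) y) := heq ▸ hself x
    have hyx : y ∈ convexHull ℝ (D.vInterval c wmin ((wmin x) x) x) := heq ▸ hself y
    have hn : ‖x‖ = ‖y‖ := le_antisymm (hnorm y x hxy) (hnorm x y hyx)
    have h1 := mem_of_extreme
      (fun s hs => hn ▸ hnorm y s (subset_convexHull ℝ _ hs)) hxy
    have h2 := mem_of_extreme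
      (fun s hs => hn ▸ hnorm x s (subset_convexHull ℝ _ hs)) hyx
    obtain ⟨h3, h4⟩ := h1.2
    have h5 := h2.2.2
    have hw : wmin x = wmin y := by
      rcases bruhat_len h4 with h | h
      · exact h
      · rcases bruhat_len h5 with h' | h'
        · exact h'.symm
        · omega
    rw [hw] at h3
    exact (wmin y).injective h3
  · refine convexHull_min ?_ (convex_convexHull ℝ _)
    exact interval_subset hc hp hwmin _ (fun z hz a ha haz => hull_closed _
      (fun u hu hau => reflect_interval hc hp hwmin hu ha hau) hz haz) hx
end
end

section
/- Define a partial order ⪯ on P by: μ ⪯ λ iff λ − μ ∈ Q and Conv [μ₊, μ] ⊆ Conv [λ₊, λ]. Then: (a) for every λ ∈ P the set {μ ∈ P : μ ⪯ λ} = Conv [λ₊, λ] ∩ (λ + Q) is finite; (b) the intertwining operator 𝒥 is triangular with respect to ⪯: for every λ ∈ P there exist complex coefficients J_{λ,μ} (μ ⪯ λ), not depending on f, such that (𝒥 f)(λ) = ∑_{μ ⪯ λ} J_{λ,μ} f(μ) for every f : P → ℂ, and the diagonal coefficient equals J_{λ,λ} = τ_{w_λ}⁻². -/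
open scoped RealInnerProductSpace BigOperators Classical

noncomputable section

namespace S5

variable {V : Type*} [NormedAddCommGroup V] [InnerProductSpace ℝ V]

lemma inner_coroot (x α : V) : ⟪x, coroot α⟫ = 2 / ⟪α, α⟫ * ⟪x, α⟫ := by
  simp [coroot, inner_smul_right]

lemma inner_self_pos {α : V} (h : α ≠ 0) : 0 < ⟪α, α⟫ :=
  real_inner_self_pos.2 h

lemma inner_coroot_self {α : V} (h : α ≠ 0) : ⟪α, coroot α⟫ = 2 := by
  rw [inner_coroot]
  have := inner_self_pos h
  field_simp

lemma coroot_neg (α : V) : coroot (-α) = -coroot α := by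
  simp [coroot]

lemma coroot_coroot {α : V} (h : α ≠ 0) : coroot (coroot α) = α := by
  have := inner_self_pos h
  simp only [coroot, inner_smul_left, inner_smul_right, smul_smul, RCLike.conj_to_real]
  have : 2 / (2 / ⟪α, α⟫ * (2 / ⟪α, α⟫ * ⟪α, α⟫)) * (2 / ⟪α, α⟫) = 1 := by
    field_simp
    try norm_num
  rw [this, one_smul]

lemma aval_add_smul (c : ℝ) (a : V × ℤ) (x v : V) (t : ℝ) :
    aval c a (x + t • v) = aval c a x + t * ⟪v, coroot a.1⟫ := by
  simp only [aval, inner_add_left, inner_smul_left, RCLike.conj_to_real]; ring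

lemma aval_neg (c : ℝ) (a : V × ℤ) (x : V) : aval c (-a.1, -a.2) x = - aval c a x := by
  simp only [aval, coroot_neg, inner_neg_right]; push_cast; ring

lemma aval_comb (c : ℝ) (a : V × ℤ) (x y : V) (s t : ℝ) (h : s + t = 1) :
    aval c a (s • x + t • y) = s * aval c a x + t * aval c a y := by
  simp only [aval, inner_add_left, inner_smul_left, RCLike.conj_to_real]
  have : t = 1 - s := by linarith
  subst this; ring

lemma sAff_comb (c : ℝ) (a : V × ℤ) (x y : V) (s t : ℝ) (h : s + t = 1) :
    sAff c a (s • x + t • y) = s • sAff c a x + t • sAff c a y := by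
  simp only [sAff, aval_comb c a x y s t h]
  module

lemma aval_sAff (c : ℝ) (a b : V × ℤ) (x : V) :
    aval c b (sAff c a x) = aval c b x - aval c a x * ⟪a.1, coroot b.1⟫ := by
  simp only [sAff]
  rw [sub_eq_add_neg, ← neg_smul, aval_add_smul]; ring

lemma aval_sAff_self (c : ℝ) (a : V × ℤ) (h : a.1 ≠ 0) (x : V) :
    aval c a (sAff c a x) = - aval c a x := by
  rw [aval_sAff, inner_coroot_self h]; ring

lemma sAff_sAff (c : ℝ) (a : V × ℤ) (h : a.1 ≠ 0) (x : V) :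
    sAff c a (sAff c a x) = x := by
  conv_lhs => rw [sAff, aval_sAff_self c a h]
  simp [sAff]

lemma aval_inj (c : ℝ) (hc : 0 < c) (a b : V × ℤ) (ha : a.1 ≠ 0) (hb : b.1 ≠ 0)
    (h : ∀ x, aval c a x = aval c b x) : a = b := by
  have h2 : a.2 = b.2 := by
    have := h 0
    simp only [aval, inner_zero_left, zero_add] at this
    have := mul_right_cancel₀ hc.ne' this
    exact_mod_cast this
  have h1 : coroot a.1 = coroot b.1 := by
    apply ext_inner_left ℝ
    intro v
    have := h v
    simp only [aval, h2] at this
    linarith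
  have : a.1 = b.1 := by rw [← coroot_coroot ha, h1, coroot_coroot hb]
  exact Prod.ext this h2

/-- affine reflection of labels -/
def arefl (a b : V × ℤ) : V × ℤ :=
  (b.1 - ⟪b.1, coroot a.1⟫ • a.1, b.2 - a.2 * ⌊⟪a.1, coroot b.1⟫⌋)

variable (D : RootSystemData V) (c : ℝ)

lemma arefl_root {a b : V × ℤ} (ha : D.IsAffRoot a) (hb : D.IsAffRoot b) :
    D.IsAffRoot (arefl a b) := D.reflect_mem _ ha _ hb

lemma neg_root {α : V} (ha : α ∈ D.R0) : -α ∈ D.R0 := by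
  have := D.reflect_mem _ ha _ ha
  rw [inner_coroot_self (D.ne_zero _ ha)] at this
  convert this using 1
  module

lemma refl_inner {α β : V} (ha : α ≠ 0) :
    ⟪β - ⟪β, coroot α⟫ • α, β - ⟪β, coroot α⟫ • α⟫ = ⟪β, β⟫ := by
  have := inner_self_pos ha
  simp only [inner_coroot, inner_sub_left, inner_sub_right, inner_smul_left, inner_smul_right,
    RCLike.conj_to_real, real_inner_comm α β]
  field_simp
  ring

lemma coroot_refl {α β : V} (ha : α ≠ 0) :
    coroot (β - ⟪β, coroot α⟫ • α) = coroot β - ⟪α, coroot β⟫ • coroot α := by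
  have h := refl_inner (β := β) ha
  rw [coroot, h]
  simp only [inner_coroot]
  simp only [coroot, smul_sub, smul_smul, real_inner_comm α β]
  congr 2
  ring

lemma aval_arefl {a b : V × ℤ} (ha : D.IsAffRoot a) (hb : D.IsAffRoot b) (x : V) :
    aval c (arefl a b) x = aval c b (sAff c a x) := by
  obtain ⟨k, hk⟩ := D.crystallographic _ hb _ ha
  rw [aval_sAff]
  simp only [aval, arefl, coroot_refl (D.ne_zero _ ha), inner_sub_right, inner_smul_right, hk,
    Int.floor_intCast]
  push_cast; ring

lemma arefl_arefl (hc : 0 < c) {a b : V × ℤ} (ha : D.IsAffRoot a) (hb : D.IsAffRoot b) :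
    arefl a (arefl a b) = b := by
  have h1 := arefl_root D ha hb
  refine aval_inj c hc _ _ (D.ne_zero _ (arefl_root D ha h1)) (D.ne_zero _ hb) fun x => ?_
  rw [aval_arefl D c ha h1, aval_arefl D c ha hb, sAff_sAff c a (D.ne_zero _ ha)]

/-- `p` is an interior point of the fundamental alcove. -/
structure IsP (p : V) : Prop where
  pos_iff : ∀ a, D.IsAffPos a ↔ D.IsAffRoot a ∧ 0 < aval c a p
  ne : ∀ a, D.IsAffRoot a → aval c a p ≠ 0

variable {D c} {p : V}

lemma IsP.neg_iff (hp : IsP D c p) (a : V × ℤ) :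
    D.IsAffNeg a ↔ D.IsAffRoot a ∧ aval c a p < 0 := by
  unfold RootSystemData.IsAffNeg
  rw [hp.pos_iff, aval_neg]
  unfold RootSystemData.IsAffRoot
  constructor
  · rintro ⟨h1, h2⟩
    exact ⟨by simpa using neg_root D h1, by linarith⟩
  · rintro ⟨h1, h2⟩
    exact ⟨neg_root D h1, by linarith⟩

lemma finDim (D : RootSystemData V) : FiniteDimensional ℝ V := by
  apply Module.finite_of_finrank_pos
  rw [D.rank_eq]; exact D.n_pos

lemma mem_pos_nat {D : RootSystemData V} {α : V} (h : α ∈ D.R0) :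
    ∃ k : Fin D.n → ℤ, α = ∑ j, (k j : ℝ) • D.simpleRoot j := by
  rcases D.pos_or_neg α h with h | h
  · obtain ⟨k, hk⟩ := D.pos_natCombo _ h
    exact ⟨fun j => k j, by simpa using hk⟩
  · obtain ⟨k, hk⟩ := D.pos_natCombo _ h
    exact ⟨fun j => - (k j : ℤ), by simp [← hk]⟩

lemma span_simple (D : RootSystemData V) :
    ⊤ ≤ Submodule.span ℝ (Set.range D.simpleRoot) := by
  rw [← D.span_top, Submodule.span_le]
  intro α h
  obtain ⟨k, rfl⟩ := mem_pos_nat h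
  exact Submodule.sum_mem _ fun j _ => Submodule.smul_mem _ _ (Submodule.subset_span ⟨j, rfl⟩)

/-- the basis of simple roots -/
def sBasis (D : RootSystemData V) : Module.Basis (Fin D.n) ℝ V :=
  basisOfTopLeSpanOfCardEqFinrank D.simpleRoot (span_simple D) (by simp [D.rank_eq])

@[simp] lemma sBasis_apply (D : RootSystemData V) (j) : sBasis D j = D.simpleRoot j := by
  simp [sBasis]

lemma exists_delta (D : RootSystemData V) : ∃ δ : V, ∀ j, ⟪D.simpleRoot j, δ⟫ = 1 := by
  have := finDim D
  have : CompleteSpace V := FiniteDimensional.complete ℝ V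
  let φ : V →ₗ[ℝ] ℝ := (sBasis D).constr ℝ (fun _ => (1 : ℝ))
  refine ⟨(InnerProductSpace.toDual ℝ V).symm (LinearMap.toContinuousLinearMap φ), fun j => ?_⟩
  rw [real_inner_comm, InnerProductSpace.toDual_symm_apply]
  have : φ (sBasis D j) = 1 := (sBasis D).constr_basis ℝ _ j
  simpa using this

lemma delta_pos {δ : V} (hδ : ∀ j, ⟪D.simpleRoot j, δ⟫ = 1) {v : V} (hv : v ≠ 0)
    (k : Fin D.n → ℕ) (hk : v = ∑ j, (k j : ℝ) • D.simpleRoot j) : 0 < ⟪v, δ⟫ := by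
  have : ⟪v, δ⟫ = ∑ j, (k j : ℝ) := by
    rw [hk, sum_inner]; simp [inner_smul_left, hδ]
  rw [this]
  apply lt_of_le_of_ne (Finset.sum_nonneg fun _ _ => by positivity)
  intro h
  rw [eq_comm, Finset.sum_eq_zero_iff_of_nonneg (fun _ _ => by positivity)] at h
  apply hv
  rw [hk]
  exact Finset.sum_eq_zero fun j hj => by rw [h j hj, zero_smul]

lemma exists_P (D : RootSystemData V) (c : ℝ) (hc : 0 < c) : ∃ p, IsP D c p := by
  obtain ⟨δ, hδ⟩ := exists_delta D
  set S := ∑ α ∈ D.R0, |⟪δ, coroot α⟫| with hS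
  have hS0 : 0 ≤ S := Finset.sum_nonneg fun _ _ => abs_nonneg _
  set ε := c / (1 + S) with hε
  have hε0 : 0 < ε := by positivity
  have hb : ∀ α ∈ D.R0, |⟪ε • δ, coroot α⟫| < c := by
    intro α h
    rw [inner_smul_left, RCLike.conj_to_real, abs_mul, abs_of_pos hε0]
    have h1 : |⟪δ, coroot α⟫| ≤ S :=
      Finset.single_le_sum (f := fun α => |⟪δ, coroot α⟫|) (fun _ _ => abs_nonneg _) h
    calc ε * |⟪δ, coroot α⟫| ≤ ε * S := by gcongr
      _ < ε * (1 + S) := by nlinarith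
      _ = c := by rw [hε]; field_simp
  have hpos : ∀ α ∈ D.pos, 0 < ⟪ε • δ, coroot α⟫ := by
    intro α h
    have hα := D.ne_zero _ (D.pos_subset h)
    obtain ⟨k, hk⟩ := D.pos_natCombo _ h
    have := delta_pos hδ hα k hk
    rw [real_inner_comm] at this
    rw [inner_smul_left, RCLike.conj_to_real, inner_coroot]
    have := inner_self_pos hα
    positivity
  have key : ∀ a : V × ℤ, D.IsAffRoot a →
      (D.IsAffPos a ∧ 0 < aval c a (ε • δ)) ∨ (¬ D.IsAffPos a ∧ aval c a (ε • δ) < 0) := by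
    rintro ⟨α, r⟩ h
    change α ∈ D.R0 at h
    have h1 := abs_lt.1 (hb α h)
    simp only [RootSystemData.IsAffPos, aval, h, true_and]
    rcases lt_trichotomy r 0 with hr | hr | hr
    · right
      refine ⟨by omega, ?_⟩
      have : (r : ℝ) ≤ -1 := by exact_mod_cast (by omega : r ≤ -1)
      nlinarith
    · subst hr
      rcases D.pos_or_neg α h with h2 | h2
      · left
        exact ⟨Or.inr ⟨rfl, h2⟩, by simpa using hpos _ h2⟩
      · right
        refine ⟨?_, ?_⟩
        · rintro (h3 | ⟨_, h3⟩)
          · omega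
          · exact D.pos_not_both _ h3 h2
        · have := hpos _ h2
          rw [coroot_neg, inner_neg_right] at this
          simp; linarith
    · left
      refine ⟨Or.inl hr, ?_⟩
      have : (1 : ℝ) ≤ r := by exact_mod_cast hr
      nlinarith
  refine ⟨ε • δ, ⟨fun a => ?_, fun a ha => ?_⟩⟩
  · constructor
    · intro h
      refine ⟨h.1, ?_⟩
      rcases key a h.1 with h2 | h2
      · exact h2.2
      · exact absurd h h2.1
    · rintro ⟨h, h1⟩
      rcases key a h with h2 | h2
      · exact h2.1
      · linarith [h2.2]
  · rcases key a ha with h2 | h2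
    · exact h2.2.ne'
    · exact h2.2.ne

lemma perm_apply_inv {V : Type*} (w : Equiv.Perm V) (x : V) : w (w⁻¹ x) = x := w.apply_symm_apply x

lemma perm_inv_apply {V : Type*} (w : Equiv.Perm V) (x : V) : w⁻¹ (w x) = x := w.symm_apply_apply x

/-! ### simple roots -/

lemma hshort_dom (D : RootSystemData V) {β : V} (hβ : β ∈ D.pos) : 0 ≤ ⟪D.hshort, coroot β⟫ := by
  obtain ⟨δ, hδ⟩ := exists_delta D
  have hb := D.pos_subset hβ
  have hb0 := D.ne_zero _ hb
  have hs := D.pos_subset D.hshort_mem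
  have h1 := D.reflect_mem _ hb _ hs
  have h2 : ‖D.hshort - ⟪D.hshort, coroot β⟫ • β‖ = ‖D.hshort‖ := by
    have := refl_inner (β := D.hshort) hb0
    rw [real_inner_self_eq_norm_sq, real_inner_self_eq_norm_sq] at this
    exact (sq_eq_sq₀ (norm_nonneg _) (norm_nonneg _)).1 this
  obtain ⟨k, hk⟩ := D.hshort_highest _ h1 h2
  rw [sub_sub_cancel] at hk
  obtain ⟨k', hk'⟩ := D.pos_natCombo _ hβ
  have h3 := delta_pos hδ hb0 k' hk'
  by_contra hlt
  push Not at hlt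
  have h4 : ⟪D.hshort, coroot β⟫ • β ≠ 0 := smul_ne_zero hlt.ne hb0
  have h5 := delta_pos hδ h4 k hk
  rw [inner_smul_left, RCLike.conj_to_real] at h5
  nlinarith

lemma hshort_bound (D : RootSystemData V) {β : V} (hβ : β ∈ D.R0) (hne : β ≠ -D.hshort) :
    -1 ≤ ⟪D.hshort, coroot β⟫ := by
  have hs := D.pos_subset D.hshort_mem
  have hb0 := D.ne_zero _ hβ
  obtain ⟨k, hk⟩ := D.crystallographic _ hβ _ hs
  rw [hk]
  suffices -2 < k by exact_mod_cast (by omega : -1 ≤ k)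
  have h1 : (-2 : ℝ) < ⟪D.hshort, coroot β⟫ := by
    rw [inner_coroot]
    have hpos := inner_self_pos hb0
    have h2 : 0 < ⟪D.hshort + β, D.hshort + β⟫ := by
      apply inner_self_pos
      intro h
      exact hne (by rw [eq_neg_iff_add_eq_zero, add_comm]; exact h)
    have h3 : ⟪D.hshort, D.hshort⟫ ≤ ⟪β, β⟫ := by
      rw [real_inner_self_eq_norm_sq, real_inner_self_eq_norm_sq]
      have := D.hshort_short _ hβ
      gcongr
    simp only [inner_add_left, inner_add_right, real_inner_comm D.hshort β] at h2
    rw [div_mul_eq_mul_div, lt_div_iff₀ hpos]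
    rw [real_inner_comm β D.hshort] at *
    linarith
  rw [hk] at h1
  exact_mod_cast h1

lemma aSimple_pos (D : RootSystemData V) (j) : D.IsAffPos (D.aSimple j) := by
  refine Fin.cases ?_ (fun i => ?_) j
  · exact ⟨neg_root D (D.pos_subset D.hshort_mem), Or.inl le_rfl⟩
  · exact ⟨D.pos_subset (D.simpleRoot_mem i), Or.inr ⟨rfl, D.simpleRoot_mem i⟩⟩

lemma aSimple_root (D : RootSystemData V) (j) : D.IsAffRoot (D.aSimple j) := (aSimple_pos D j).1

/-- A simple reflection permutes the positive roots other than the simple root. -/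
lemma arefl_simple_pos (D : RootSystemData V) (j) {b : V × ℤ} (hb : D.IsAffPos b)
    (hne : b ≠ D.aSimple j) : D.IsAffPos (arefl (D.aSimple j) b) := by
  obtain ⟨β, r⟩ := b
  obtain ⟨hβ, hr⟩ := hb
  change β ∈ D.R0 at hβ
  refine ⟨arefl_root D (aSimple_root D j) hβ, ?_⟩
  have hs := D.pos_subset D.hshort_mem
  have hs0 := D.ne_zero _ hs
  revert hne
  refine Fin.cases ?_ (fun i => ?_) j
  · intro hne
    change (β, r) ≠ (-D.hshort, 1) at hne
    obtain ⟨k, hk⟩ := D.crystallographic _ hβ _ hs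
    have e2 : (arefl (D.aSimple 0) (β, r)).2 = r + k := by
      change r - 1 * ⌊⟪-D.hshort, coroot β⟫⌋ = r + k
      rw [inner_neg_left, hk, ← Int.cast_neg, Int.floor_intCast]; ring
    have e1 : (arefl (D.aSimple 0) (β, r)).1 = β - ⟪β, coroot D.hshort⟫ • D.hshort := by
      change β - ⟪β, coroot (-D.hshort)⟫ • (-D.hshort) = _
      rw [coroot_neg, inner_neg_right]; simp
    rw [e1, e2]
    simp only at hr
    by_cases hbs : β = -D.hshort
    · subst hbs
      have hk2 : k = -2 := by
        rw [coroot_neg, inner_neg_right, inner_coroot_self hs0] at hk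
        exact_mod_cast hk.symm
      have e3 : -D.hshort - ⟪-D.hshort, coroot D.hshort⟫ • D.hshort = D.hshort := by
        rw [inner_neg_left, inner_coroot_self hs0]; module
      rw [e3]
      rcases hr with hr | ⟨hr, h⟩
      · have : r ≠ 1 := fun h => hne (by rw [h])
        rcases eq_or_ne r 2 with h2 | h2
        · right; exact ⟨by omega, D.hshort_mem⟩
        · left; omega
      · exact absurd h (D.pos_not_both _ D.hshort_mem)
    · have hk1 : -1 ≤ k := by
        have := hshort_bound D hβ hbs
        rw [hk] at this; exact_mod_cast this
      rcases hr with hr | ⟨hr, h⟩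
      · by_cases h0 : r + k = 0
        · right
          refine ⟨h0, ?_⟩
          have hkk : k = -1 := by omega
          have hg := D.reflect_mem _ hs _ hβ
          rcases D.pos_or_neg _ hg with h | h
          · exact h
          · exfalso
            have h1 := hshort_dom D h
            rw [coroot_neg, coroot_refl hs0, inner_neg_right, inner_sub_right, inner_smul_right,
              inner_coroot_self hs0, hk, hkk] at h1
            norm_num at h1
        · left; omega
      · have h0 : 0 ≤ k := by
          have := hshort_dom D h
          rw [hk] at this; exact_mod_cast this
        rcases eq_or_ne k 0 with h1 | h1
        · right
          refine ⟨by omega, ?_⟩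
          have : ⟪β, coroot D.hshort⟫ = 0 := by
            rw [h1, inner_coroot] at hk
            have := inner_self_pos (D.ne_zero _ hβ)
            rw [inner_coroot]
            have h3 : ⟪D.hshort, β⟫ = 0 := by
              rcases mul_eq_zero.1 (hk.trans Int.cast_zero) with h | h
              · exfalso; have : 0 < 2 / ⟪β, β⟫ := by positivity
                linarith
              · exact h
            rw [real_inner_comm] at h3
            rw [h3]; simp
          rw [this]; simpa using h
        · left; omega
  · intro hne
    change (β, r) ≠ (D.simpleRoot i, 0) at hne
    have e2 : (arefl (D.aSimple i.succ) (β, r)).2 = r := by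
      change r - 0 * _ = r
      ring
    have e1 : (arefl (D.aSimple i.succ) (β, r)).1
        = β - ⟪β, coroot (D.simpleRoot i)⟫ • D.simpleRoot i := rfl
    rw [e1, e2]
    rcases hr with hr | ⟨hr, h⟩
    · exact Or.inl hr
    right
    refine ⟨hr, ?_⟩
    simp only at hr h
    subst hr
    have hne' : β ≠ D.simpleRoot i := fun h => hne (by rw [h])
    have hi := D.pos_subset (D.simpleRoot_mem i)
    have hg := D.reflect_mem _ hi _ hβ
    rcases D.pos_or_neg _ hg with h1 | h1
    · exact h1
    exfalso
    obtain ⟨k, hk⟩ := D.pos_natCombo _ h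
    obtain ⟨k', hk'⟩ := D.pos_natCombo _ h1
    have hz : ∀ i', i' ≠ i → k i' = 0 := by
      intro i' hi'
      have hr1 : (sBasis D).repr β i' = k i' := by
        rw [hk]
        simp_rw [← sBasis_apply D]
        rw [Module.Basis.repr_sum_self]
      have hr2 : (sBasis D).repr (-(β - ⟪β, coroot (D.simpleRoot i)⟫ • D.simpleRoot i)) i' = k' i' := by
        rw [hk']
        simp_rw [← sBasis_apply D]
        rw [Module.Basis.repr_sum_self]
      rw [← sBasis_apply D i] at hr2
      simp only [map_neg, map_sub, map_smul, Module.Basis.repr_self, Finsupp.coe_neg,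
        Finsupp.coe_sub, Finsupp.coe_smul, Pi.neg_apply, Pi.sub_apply, Pi.smul_apply, hr1,
        Finsupp.single_eq_of_ne hi', smul_zero, sub_zero] at hr2
      have h1 : (0 : ℝ) ≤ k i' := by positivity
      have h2 : (0 : ℝ) ≤ k' i' := by positivity
      have : (k i' : ℝ) = 0 := by linarith
      exact_mod_cast this
    rw [Finset.sum_eq_single i (fun i' _ h => by rw [hz i' h]; simp) (by simp)] at hk
    rcases D.reduced _ hi (k i) (hk ▸ hβ) with h2 | h2
    · rw [h2, one_smul] at hk; exact hne' hk
    · have : (0 : ℝ) ≤ k i := by positivity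
      linarith

lemma IsP.simple_pos (hp : IsP D c p) (j) {b : V × ℤ} (hb : D.IsAffRoot b) (hb1 : 0 < aval c b p)
    (hne : b ≠ D.aSimple j) : 0 < aval c b (sAff c (D.aSimple j) p) := by
  have := arefl_simple_pos D j ((hp.pos_iff _).2 ⟨hb, hb1⟩) hne
  rw [hp.pos_iff, aval_arefl D c (aSimple_root D j) hb] at this
  exact this.2

/-! ### separating roots -/

variable (D c p) in
/-- roots separating `p` and `q` -/
def Sep (q : V) : Set (V × ℤ) := {b | D.IsAffRoot b ∧ 0 < aval c b p ∧ aval c b q < 0}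

lemma Sep_finite (hc : 0 < c) (q : V) : (Sep D c p q).Finite := by
  have : ∀ α ∈ D.R0, {r : ℤ | (α, r) ∈ Sep D c p q}.Finite := by
    intro α _
    apply (Set.finite_Icc ⌊-⟪p, coroot α⟫ / c⌋ ⌈-⟪q, coroot α⟫ / c⌉).subset
    rintro r ⟨-, h1, h2⟩
    simp only [aval] at h1 h2
    constructor
    · have : -⟪p, coroot α⟫ / c < r := by rw [div_lt_iff₀ hc]; linarith
      exact Int.floor_le_iff.2 (by linarith)
    · have : r < -⟪q, coroot α⟫ / c := by rw [lt_div_iff₀ hc]; linarith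
      exact Int.le_ceil_iff.2 (by linarith)
  apply ((D.R0.finite_toSet).biUnion (fun α hα => (this α hα).image (fun r => (α, r)))).subset
  rintro ⟨α, r⟩ h
  simp only [Set.mem_iUnion]
  exact ⟨α, h.1, r, h, rfl⟩

lemma Sep_lt (hc : 0 < c) {a : V × ℤ} (ha : D.IsAffRoot a) {q : V} (h1 : 0 < aval c a p)
    (h2 : 0 < aval c a q) : (Sep D c p q).ncard < (Sep D c p (sAff c a q)).ncard := by
  have ha0 := D.ne_zero _ ha
  let φ : V × ℤ → V × ℤ := fun b => if 0 < aval c b (sAff c a p) then arefl a b else b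
  have haS : a ∈ Sep D c p (sAff c a q) :=
    ⟨ha, h1, by rw [aval_sAff_self c a ha0]; linarith⟩
  have hφ : ∀ b ∈ Sep D c p q, φ b ∈ Sep D c p (sAff c a q) \ {a} := by
    rintro b ⟨hb, hb1, hb2⟩
    by_cases h : 0 < aval c b (sAff c a p)
    · simp only [φ, h, if_true]
      refine ⟨⟨arefl_root D ha hb, ?_, ?_⟩, ?_⟩
      · rwa [aval_arefl D c ha hb]
      · rwa [aval_arefl D c ha hb, sAff_sAff c a ha0]
      · intro he
        have e := aval_arefl D c ha hb (sAff c a p)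
        rw [show arefl a b = a from he, sAff_sAff c a ha0, aval_sAff_self c a ha0] at e
        linarith
    · simp only [φ, h, if_false]
      refine ⟨⟨hb, hb1, ?_⟩, ?_⟩
      · rw [aval_sAff] at h ⊢
        have : 0 < ⟪a.1, coroot b.1⟫ := by
          by_contra hh
          push Not at hh h
          nlinarith
        nlinarith
      · intro he
        rw [show b = a from he] at hb2
        linarith
  have hinj : Set.InjOn φ (Sep D c p q) := by
    rintro b ⟨hb, hb1, hb2⟩ b' ⟨hb', hb1', hb2'⟩ he
    by_cases h : 0 < aval c b (sAff c a p) <;> by_cases h' : 0 < aval c b' (sAff c a p)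
    · simp only [φ, h, h', if_true] at he
      rw [← arefl_arefl D c hc ha hb, he, arefl_arefl D c hc ha hb']
    · simp only [φ, h, h', if_true, if_false] at he
      rw [← he, aval_arefl D c ha hb, sAff_sAff c a ha0] at h'
      exact absurd hb1 h'
    · simp only [φ, h, h', if_true, if_false] at he
      rw [he, aval_arefl D c ha hb', sAff_sAff c a ha0] at h
      exact absurd hb1' h
    · simpa only [φ, h, h', if_false] using he
  have hf := Sep_finite (D := D) (c := c) (p := p) hc (sAff c a q)
  calc (Sep D c p q).ncard ≤ (Sep D c p (sAff c a q) \ {a}).ncard :=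
        Set.ncard_le_ncard_of_injOn φ hφ hinj (hf.subset Set.sdiff_subset)
    _ < _ := Set.ncard_sdiff_singleton_lt_of_mem haS hf

lemma Sep_gt (hc : 0 < c) {a : V × ℤ} (ha : D.IsAffRoot a) {q : V} (h1 : 0 < aval c a p)
    (h2 : aval c a q < 0) : (Sep D c p (sAff c a q)).ncard < (Sep D c p q).ncard := by
  have ha0 := D.ne_zero _ ha
  have := Sep_lt hc ha (q := sAff c a q) h1 (by rw [aval_sAff_self c a ha0]; linarith)
  rwa [sAff_sAff c a ha0] at this

lemma Sep_simple_le (hc : 0 < c) (hp : IsP D c p) (j) (q : V) :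
    (Sep D c p (sAff c (D.aSimple j) q)).ncard ≤ (Sep D c p q).ncard + 1 := by
  have ha := aSimple_root D j
  have hf := Sep_finite (D := D) (c := c) (p := p) hc q
  calc _ ≤ (insert (D.aSimple j) (arefl (D.aSimple j) '' Sep D c p q)).ncard := by
        apply Set.ncard_le_ncard _ ((hf.image _).insert _)
        rintro b ⟨hb, hb1, hb2⟩
        by_cases h : b = D.aSimple j
        · exact Or.inl h
        · right
          refine ⟨arefl (D.aSimple j) b, ⟨arefl_root D ha hb, ?_, ?_⟩, arefl_arefl D c hc ha hb⟩
          · rw [aval_arefl D c ha hb]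
            exact hp.simple_pos j hb hb1 h
          · rwa [aval_arefl D c ha hb]
    _ ≤ (arefl (D.aSimple j) '' Sep D c p q).ncard + 1 := Set.ncard_insert_le _ _
    _ ≤ _ := by
        exact Nat.add_le_add_right (Set.ncard_image_le hf) 1

lemma Sep_simple_eq (hc : 0 < c) (hp : IsP D c p) (j) (q : V) (hq : 0 < aval c (D.aSimple j) q) :
    Sep D c p (sAff c (D.aSimple j) q) =
      insert (D.aSimple j) (arefl (D.aSimple j) '' Sep D c p q) := by
  have ha := aSimple_root D j
  have ha0 := D.ne_zero _ ha
  ext b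
  constructor
  · rintro ⟨hb, hb1, hb2⟩
    by_cases h : b = D.aSimple j
    · exact Or.inl h
    · right
      refine ⟨arefl (D.aSimple j) b, ⟨arefl_root D ha hb, ?_, ?_⟩, arefl_arefl D c hc ha hb⟩
      · rw [aval_arefl D c ha hb]
        exact hp.simple_pos j hb hb1 h
      · rwa [aval_arefl D c ha hb]
  · rintro (rfl | ⟨b, ⟨hb, hb1, hb2⟩, rfl⟩)
    · exact ⟨ha, ((hp.pos_iff _).1 (aSimple_pos D j)).2,
        by rw [aval_sAff_self c _ ha0]; linarith⟩
    · refine ⟨arefl_root D ha hb, ?_, ?_⟩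
      · rw [aval_arefl D c ha hb]
        refine hp.simple_pos j hb hb1 ?_
        rintro rfl
        linarith
      · rwa [aval_arefl D c ha hb, sAff_sAff c _ ha0]

lemma simple_not_mem (hp : IsP D c p) (j) (q : V) :
    D.aSimple j ∉ arefl (D.aSimple j) '' Sep D c p q := by
  have ha := aSimple_root D j
  have ha0 := D.ne_zero _ ha
  rintro ⟨b, ⟨hb, hb1, hb2⟩, he⟩
  have h1 := ((hp.pos_iff _).1 (aSimple_pos D j)).2
  have e := aval_arefl D c ha hb (sAff c (D.aSimple j) p)
  rw [he, sAff_sAff c _ ha0, aval_sAff_self c _ ha0] at e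
  linarith

/-! ### the affine Weyl group -/

variable (D c) in
/-- `w` permutes affine roots -/
def Good (w : Equiv.Perm V) : Prop :=
  (∀ a, D.IsAffRoot a → ∃ b, D.IsAffRoot b ∧ ∀ x, aval c a x = aval c b (w x)) ∧
  (∀ a, D.IsAffRoot a → ∃ b, D.IsAffRoot b ∧ ∀ x, aval c a (w x) = aval c b x)

lemma good_WR {w : Equiv.Perm V} (hw : w ∈ D.WR c) : Good D c w := by
  induction hw using Subgroup.closure_induction with
  | mem e he =>
    obtain ⟨a, ha, he⟩ := he
    have ha0 := D.ne_zero _ ha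
    constructor <;> intro b hb <;> refine ⟨arefl a b, arefl_root D ha hb, fun x => ?_⟩
    · rw [he, aval_arefl D c ha hb, sAff_sAff c a ha0]
    · rw [he, aval_arefl D c ha hb]
  | one => exact ⟨fun a ha => ⟨a, ha, fun x => rfl⟩, fun a ha => ⟨a, ha, fun x => rfl⟩⟩
  | mul u v _ _ hu hv =>
    constructor
    · intro a ha
      obtain ⟨b, hb, h⟩ := hv.1 a ha
      obtain ⟨d, hd, h'⟩ := hu.1 b hb
      exact ⟨d, hd, fun x => by rw [h, h']; rfl⟩
    · intro a ha
      obtain ⟨b, hb, h⟩ := hu.2 a ha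
      obtain ⟨d, hd, h'⟩ := hv.2 b hb
      exact ⟨d, hd, fun x => by rw [← h', ← h]; rfl⟩
  | inv u _ hu =>
    constructor
    · intro a ha
      obtain ⟨b, hb, h⟩ := hu.2 a ha
      exact ⟨b, hb, fun x => by rw [← h, perm_apply_inv]⟩
    · intro a ha
      obtain ⟨b, hb, h⟩ := hu.1 a ha
      exact ⟨b, hb, fun x => by rw [h, perm_apply_inv]⟩

lemma RW_eq (hp : IsP D c p) {w : Equiv.Perm V} (hw : w ∈ D.WR c) :
    D.RW c w = Sep D c p (w⁻¹ p) := by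
  ext a
  simp only [RootSystemData.RW, Sep, Set.mem_ofPred_eq, hp.pos_iff, mapsRoot]
  constructor
  · rintro ⟨⟨h1, h2⟩, b, hb, h⟩
    refine ⟨h1, h2, ?_⟩
    rw [h]; exact ((hp.neg_iff b).1 hb).2
  · rintro ⟨h1, h2, h3⟩
    refine ⟨⟨h1, h2⟩, ?_⟩
    obtain ⟨b, hb, h⟩ := (good_WR hw).1 a h1
    refine ⟨b, (hp.neg_iff b).2 ⟨hb, ?_⟩, fun x => ?_⟩
    · rw [h] at h3; simpa using h3
    · rw [h]; simp

lemma len_eq (hp : IsP D c p) {w : Equiv.Perm V} (hw : w ∈ D.WR c) :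
    D.len c w = (Sep D c p (w⁻¹ p)).ncard := by
  rw [RootSystemData.len, RW_eq hp hw]

variable (D c) in
/-- the affine reflection as a permutation -/
def sPerm (a : V × ℤ) (ha : D.IsAffRoot a) : Equiv.Perm V :=
  Function.Involutive.toPerm (sAff c a) (sAff_sAff c a (D.ne_zero _ ha))

lemma sPerm_apply (a : V × ℤ) (ha : D.IsAffRoot a) (x : V) : sPerm D c a ha x = sAff c a x := rfl

lemma sPerm_inv (a : V × ℤ) (ha : D.IsAffRoot a) : (sPerm D c a ha)⁻¹ = sPerm D c a ha := rfl

lemma sPerm_mem (a : V × ℤ) (ha : D.IsAffRoot a) : sPerm D c a ha ∈ D.WR c :=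
  Subgroup.subset_closure ⟨a, ha, fun _ => rfl⟩

lemma sPerm_mul_self (a : V × ℤ) (ha : D.IsAffRoot a) : sPerm D c a ha * sPerm D c a ha = 1 := by
  rw [mul_eq_one_iff_eq_inv, sPerm_inv]

lemma len_mul_sPerm (hp : IsP D c p) {w : Equiv.Perm V} (hw : w ∈ D.WR c)
    (a : V × ℤ) (ha : D.IsAffRoot a) :
    D.len c (w * sPerm D c a ha) = (Sep D c p (sAff c a (w⁻¹ p))).ncard := by
  rw [len_eq hp (mul_mem hw (sPerm_mem a ha)), mul_inv_rev, sPerm_inv]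
  rfl

lemma reg (hp : IsP D c p) {w : Equiv.Perm V} (hw : w ∈ D.WR c) {a : V × ℤ}
    (ha : D.IsAffRoot a) : aval c a (w⁻¹ p) ≠ 0 := by
  obtain ⟨b, hb, h⟩ := (good_WR hw).1 a ha
  rw [h, perm_apply_inv]
  exact hp.ne b hb

lemma len_lt_iff (hc : 0 < c) (hp : IsP D c p) {w : Equiv.Perm V} (hw : w ∈ D.WR c)
    {a : V × ℤ} (ha : D.IsAffPos a) (ha' : D.IsAffRoot a) :
    D.len c (w * sPerm D c a ha') < D.len c w ↔ aval c a (w⁻¹ p) < 0 := by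
  rw [len_mul_sPerm hp hw, len_eq hp hw]
  have ha1 := (hp.pos_iff _).1 ha
  constructor
  · intro h
    by_contra hh
    push Not at hh
    have := Sep_lt hc ha1.1 ha1.2 (lt_of_le_of_ne hh (reg hp hw ha1.1).symm)
    omega
  · exact fun h => Sep_gt hc ha1.1 ha1.2 h

/-- sign comparison: if `w x ∈ alcove` then signs of `a` at `x` and `w⁻¹ p` are compatible. -/
lemma sign_compat (hp : IsP D c p) {w : Equiv.Perm V} (hw : w ∈ D.WR c) {x : V}
    (hx : w x ∈ D.alcove c) {a : V × ℤ} (ha : D.IsAffRoot a) :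
    (aval c a (w⁻¹ p) < 0 → aval c a x ≤ 0) ∧ (aval c a x < 0 → aval c a (w⁻¹ p) < 0) := by
  obtain ⟨b, hb, h⟩ := (good_WR hw).1 a ha
  rw [h, perm_apply_inv, h]
  have key : 0 < aval c b p → 0 ≤ aval c b (w x) := fun h => hx b ((hp.pos_iff b).2 ⟨hb, h⟩)
  have key2 : aval c b p < 0 → aval c b (w x) ≤ 0 := by
    intro h
    have := hx _ ((hp.neg_iff b).2 ⟨hb, h⟩)
    rw [aval_neg] at this
    linarith
  refine ⟨key2, fun h => ?_⟩
  by_contra hh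
  push Not at hh
  have := key (lt_of_le_of_ne hh (hp.ne b hb).symm)
  linarith

/-! ### the alcove, Bruhat order, and downward reflection chains -/

variable {wmin : V → Equiv.Perm V}

lemma len_one (hp : IsP D c p) : D.len c 1 = 0 := by
  rw [len_eq hp (one_mem _)]
  have : Sep D c p ((1 : Equiv.Perm V)⁻¹ p) = ∅ := by
    ext b
    simp only [Set.mem_empty_iff_false, iff_false]
    rintro ⟨_, h1, h2⟩
    simp only [inv_one, Equiv.Perm.one_apply] at h2
    linarith
  rw [this, Set.ncard_empty]

lemma p_mem (hp : IsP D c p) : p ∈ D.alcove c :=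
  fun a ha => ((hp.pos_iff a).1 ha).2.le

lemma eq_one_of_len (hc : 0 < c) (hp : IsP D c p) (hw : D.IsWmin c wmin) {w : Equiv.Perm V}
    (h : w ∈ D.WR c) (hl : D.len c w = 0) : w = 1 := by
  have h1 : w p ∈ D.alcove c := by
    intro a ha
    have ha1 := (hp.pos_iff a).1 ha
    obtain ⟨b, hb, hbe⟩ := (good_WR h).2 a ha1.1
    rw [hbe]
    by_contra hh
    push Not at hh
    -- then `-b` is a positive root separated by `w`
    have : Sep D c p (w⁻¹ p) = ∅ := by
      rw [len_eq hp h, Set.ncard_eq_zero (Sep_finite hc _)] at hl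
      exact hl
    have hm : (-b.1, -b.2) ∈ Sep D c p (w⁻¹ p) := by
      refine ⟨neg_root D hb, ?_, ?_⟩
      · rw [aval_neg]; linarith
      · rw [aval_neg, ← hbe, perm_apply_inv]; linarith [ha1.2]
    rw [this] at hm
    exact hm
  have e1 := (hw p).2.2 w h h1
  have e2 := (hw p).2.2 1 (one_mem _) (p_mem hp)
  rw [len_one hp] at e2
  rw [hl] at e1
  simp only [not_lt_zero, false_or] at e1 e2
  rw [e1, e2]

lemma exists_sep (hc : 0 < c) (hp : IsP D c p) {w : Equiv.Perm V} (h : w ∈ D.WR c)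
    (hl : D.len c w ≠ 0) : ∃ a, D.IsAffPos a ∧ aval c a (w⁻¹ p) < 0 := by
  rw [len_eq hp h] at hl
  obtain ⟨a, ha, h1, h2⟩ := Set.nonempty_of_ncard_ne_zero hl
  exact ⟨a, (hp.pos_iff a).2 ⟨ha, h1⟩, h2⟩

lemma bstep (hc : 0 < c) (hp : IsP D c p) {w : Equiv.Perm V} (h : w ∈ D.WR c)
    {a : V × ℤ} (ha : D.IsAffPos a) (ha' : D.IsAffRoot a) (h2 : aval c a (w⁻¹ p) < 0) :
    D.bruhatStep c (w * sPerm D c a ha') w := by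
  refine ⟨a, ha, sPerm D c a ha', fun x => rfl, ?_, ?_⟩
  · rw [mul_assoc, sPerm_mul_self, mul_one]
  · exact (len_lt_iff hc hp h ha ha').2 h2

lemma one_le (hc : 0 < c) (hp : IsP D c p) (hw : D.IsWmin c wmin) (n : ℕ) :
    ∀ w ∈ D.WR c, D.len c w = n → D.bruhatLE c 1 w := by
  induction n using Nat.strong_induction_on with
  | _ n ih =>
    intro w h hl
    rcases Nat.eq_zero_or_pos n with h0 | h0
    · rw [eq_one_of_len hc hp hw h (hl.trans h0)]; exact Relation.ReflTransGen.refl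
    · obtain ⟨a, ha, h2⟩ := exists_sep hc hp h (by omega)
      have ha' : D.IsAffRoot a := ha.1
      have hlt := (len_lt_iff hc hp h ha ha').2 h2
      exact (ih _ (by omega) _ (mul_mem h (sPerm_mem a ha')) rfl).tail (bstep hc hp h ha ha' h2)

lemma sAff_fix {a : V × ℤ} {x : V} (h : aval c a x = 0) : sAff c a x = x := by
  simp [sAff, h]

lemma fund_dom (hc : 0 < c) (hp : IsP D c p) (hw : D.IsWmin c wmin) (n : ℕ) :
    ∀ w ∈ D.WR c, D.len c w = n → ∀ y ∈ D.alcove c, w y ∈ D.alcove c → w y = y := by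
  induction n using Nat.strong_induction_on with
  | _ n ih =>
    intro w h hl y hy hwy
    rcases Nat.eq_zero_or_pos n with h0 | h0
    · rw [eq_one_of_len hc hp hw h (hl.trans h0)]; rfl
    · obtain ⟨a, ha, h2⟩ := exists_sep hc hp h (by omega)
      have ha' : D.IsAffRoot a := ha.1
      have hlt := (len_lt_iff hc hp h ha ha').2 h2
      have h0 : aval c a y = 0 := le_antisymm ((sign_compat hp h hwy ha').1 h2) (hy a ha)
      have e : (w * sPerm D c a ha') y = w y := by
        rw [Equiv.Perm.mul_apply, sPerm_apply, sAff_fix h0]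
      rw [← e]
      exact ih _ (by omega) _ (mul_mem h (sPerm_mem a ha')) rfl y hy (by rwa [e])

lemma plus_eq (hc : 0 < c) (hp : IsP D c p) (hw : D.IsWmin c wmin) {w : Equiv.Perm V}
    (h : w ∈ D.WR c) {y : V} (hy : w y ∈ D.alcove c) : w y = wmin y y := by
  have := fund_dom hc hp hw _ (w * (wmin y)⁻¹) (mul_mem h (inv_mem (hw y).1)) rfl
    (wmin y y) (hw y).2.1 (by simpa using hy)
  simpa using this

lemma wmin_pos (hc : 0 < c) (hp : IsP D c p) (hw : D.IsWmin c wmin) {y : V}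
    {a : V × ℤ} (ha : D.IsAffPos a) (h0 : aval c a y = 0) : ¬ aval c a ((wmin y)⁻¹ p) < 0 := by
  intro h2
  have ha' : D.IsAffRoot a := ha.1
  have h1 := (len_lt_iff hc hp (hw y).1 ha ha').2 h2
  rcases (hw y).2.2 (wmin y * sPerm D c a ha') (mul_mem (hw y).1 (sPerm_mem a ha'))
    (by rw [Equiv.Perm.mul_apply, sPerm_apply, sAff_fix h0]; exact (hw y).2.1) with h | h
  · omega
  · rw [h] at h1; omega

lemma wmin_le (hc : 0 < c) (hp : IsP D c p) (hw : D.IsWmin c wmin) (y : V) (n : ℕ) :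
    ∀ w ∈ D.WR c, D.len c w = n → w y ∈ D.alcove c → D.bruhatLE c (wmin y) w := by
  induction n using Nat.strong_induction_on with
  | _ n ih =>
    intro w h hl hy
    by_cases hex : ∃ a, D.IsAffPos a ∧ aval c a y = 0 ∧ aval c a (w⁻¹ p) < 0
    · obtain ⟨a, ha, h0, h2⟩ := hex
      have ha' : D.IsAffRoot a := ha.1
      have hlt := (len_lt_iff hc hp h ha ha').2 h2
      refine (ih _ (by omega) (w * sPerm D c a ha') (mul_mem h (sPerm_mem a ha')) rfl ?_).tail
        (bstep hc hp h ha ha' h2)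
      rw [Equiv.Perm.mul_apply, sPerm_apply, sAff_fix h0]; exact hy
    · have key : ∀ v ∈ D.WR c, v y ∈ D.alcove c →
          (∀ a, D.IsAffPos a → aval c a y = 0 → ¬ aval c a (v⁻¹ p) < 0) →
          Sep D c p (v⁻¹ p) = Sep D c p y := by
        intro v hv hvy hv0
        ext b
        constructor
        · rintro ⟨h1, h2, h3⟩
          refine ⟨h1, h2, lt_of_le_of_ne ((sign_compat hp hv hvy h1).1 h3) fun h0 => ?_⟩
          exact hv0 b ((hp.pos_iff b).2 ⟨h1, h2⟩) h0 h3
        · rintro ⟨h1, h2, h3⟩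
          exact ⟨h1, h2, (sign_compat hp hv hvy h1).2 h3⟩
      have e1 := key w h hy (fun a ha h0 h2 => hex ⟨a, ha, h0, h2⟩)
      have e2 := key (wmin y) (hw y).1 (hw y).2.1 (fun a ha h0 => wmin_pos hc hp hw ha h0)
      rcases (hw y).2.2 w h hy with h3 | h3
      · rw [len_eq hp h, len_eq hp (hw y).1, e1, e2] at h3
        omega
      · rw [h3]; exact Relation.ReflTransGen.refl

variable (D c) in
/-- a downward reflection -/
def dstep (x y : V) : Prop := ∃ a, D.IsAffPos a ∧ aval c a x < 0 ∧ y = sAff c a x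

variable (D c) in
/-- points reachable by downward reflections -/
def Down (x : V) : Set V := {z | Relation.ReflTransGen (dstep D c) x z}

lemma self_mem_Down (x : V) : x ∈ Down D c x := Relation.ReflTransGen.refl

lemma bruhatStep_WR {w w' : Equiv.Perm V} (h : D.bruhatStep c w w') (h' : w' ∈ D.WR c) :
    w ∈ D.WR c := by
  obtain ⟨a, ha, e, he, rfl, _⟩ := h
  have : e ∈ D.WR c := Subgroup.subset_closure ⟨a, ha.1, he⟩
  exact (Subgroup.mul_mem_cancel_right _ this).1 h'

lemma bruhat_down (hc : 0 < c) (hp : IsP D c p) {x₀ : V} (hx : x₀ ∈ D.alcove c)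
    {u v : Equiv.Perm V} (h : D.bruhatLE c u v) (hv : v ∈ D.WR c) :
    u ∈ D.WR c ∧ u⁻¹ x₀ ∈ Down D c (v⁻¹ x₀) := by
  induction h using Relation.ReflTransGen.head_induction_on with
  | refl => exact ⟨hv, self_mem_Down _⟩
  | @head w w'' h h' ih =>
    have hwm := bruhatStep_WR h ih.1
    refine ⟨hwm, ?_⟩
    obtain ⟨a, ha, e, he, rfl, hl⟩ := h
    have ha' : D.IsAffRoot a := ha.1
    have hee : e = sPerm D c a ha' := Equiv.ext fun x => by rw [he, sPerm_apply]
    subst hee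
    have hl2 : D.len c ((w * sPerm D c a ha') * sPerm D c a ha') < D.len c (w * sPerm D c a ha') := by
      rwa [mul_assoc, sPerm_mul_self, mul_one]
    have hneg := (len_lt_iff hc hp ih.1 ha ha').1 hl2
    set w' := w * sPerm D c a ha' with hw'
    have hy : w' (w'⁻¹ x₀) ∈ D.alcove c := by rwa [perm_apply_inv]
    have hle := (sign_compat hp ih.1 hy ha').1 hneg
    have e1 : w⁻¹ x₀ = sAff c a (w'⁻¹ x₀) := by
      have : w = w' * sPerm D c a ha' := by rw [hw', mul_assoc, sPerm_mul_self, mul_one]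
      rw [this, mul_inv_rev, sPerm_inv]; rfl
    rw [e1]
    rcases hle.lt_or_eq with h | h
    · exact Relation.ReflTransGen.tail ih.2 ⟨a, ha, h, rfl⟩
    · rw [sAff_fix h]; exact ih.2

lemma down_vle (hc : 0 < c) (hp : IsP D c p) (hw : D.IsWmin c wmin) {z : V} {a : V × ℤ}
    (ha : D.IsAffPos a) (h : aval c a z < 0) :
    wmin (sAff c a z) (sAff c a z) = wmin z z ∧
      D.bruhatLE c (wmin (sAff c a z)) (wmin z) := by
  have ha' : D.IsAffRoot a := ha.1
  have e : (wmin z * sPerm D c a ha') (sAff c a z) = wmin z z := by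
    rw [Equiv.Perm.mul_apply, sPerm_apply, sAff_sAff c a (D.ne_zero _ ha')]
  have hm := mul_mem (hw z).1 (sPerm_mem a ha')
  have hal : (wmin z * sPerm D c a ha') (sAff c a z) ∈ D.alcove c := by
    rw [e]; exact (hw z).2.1
  refine ⟨by rw [← plus_eq hc hp hw hm hal, e], ?_⟩
  refine (wmin_le hc hp hw _ _ _ hm rfl hal).tail (bstep hc hp (hw z).1 ha ha' ?_)
  exact (sign_compat hp (hw z).1 (hw z).2.1 ha').2 h

lemma wmin_plus (hp : IsP D c p) (hw : D.IsWmin c wmin) {y : V} (hy : y ∈ D.alcove c) :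
    wmin y = 1 := by
  have e2 := (hw y).2.2 1 (one_mem _) hy
  rw [len_one hp] at e2
  simp only [not_lt_zero, false_or] at e2
  exact e2.symm

lemma interval_eq (hc : 0 < c) (hp : IsP D c p) (hw : D.IsWmin c wmin) (x : V) :
    D.vInterval c wmin (wmin x x) x = Down D c x := by
  ext z
  constructor
  · rintro ⟨-, h1, h2⟩
    have := (bruhat_down hc hp (hw x).2.1 h2 (hw x).1).2
    rw [perm_inv_apply, ← h1, perm_inv_apply] at this
    exact this
  · intro h
    have hv : D.vle c wmin z x := by
      induction h with
      | refl => exact ⟨rfl, Relation.ReflTransGen.refl⟩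
      | tail _ h ih =>
        obtain ⟨a, ha, h2, rfl⟩ := h
        have := down_vle hc hp hw ha h2
        exact ⟨this.1.trans ih.1, this.2.trans ih.2⟩
    refine ⟨⟨?_, ?_⟩, hv⟩
    · rw [wmin_plus hp hw (hw x).2.1, hv.1]; rfl
    · rw [wmin_plus hp hw (hw x).2.1]
      exact one_le hc hp hw _ _ (hw z).1 rfl

/-! ### convexity -/

lemma convex_reflect (a : V × ℤ) (S : Set V)
    (hS : ∀ z ∈ S, aval c a z < 0 → sAff c a z ∈ S) :
    ∀ y ∈ convexHull ℝ S, aval c a y < 0 → sAff c a y ∈ convexHull ℝ S := by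
  set H := convexHull ℝ S with hH
  have hcv : Convex ℝ H := convex_convexHull ℝ S
  let T : Set V := {y | y ∈ H ∧ y + max 0 (-aval c a y) • a.1 ∈ H}
  have hT : Convex ℝ T := by
    rintro u ⟨hu, hu'⟩ v ⟨hv, hv'⟩ s t hs ht hst
    have hy := hcv hu hv hs ht hst
    refine ⟨hy, ?_⟩
    have hy' := hcv hu' hv' hs ht hst
    set mu := max 0 (-aval c a u)
    set mv := max 0 (-aval c a v)
    set m := max 0 (-aval c a (s • u + t • v)) with hm
    have h1 : m ≤ s * mu + t * mv := by
      rw [hm, aval_comb c a u v s t hst]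
      have e1 : 0 ≤ mu := le_max_left _ _
      have e2 : 0 ≤ mv := le_max_left _ _
      have e3 : -aval c a u ≤ mu := le_max_right _ _
      have e4 : -aval c a v ≤ mv := le_max_right _ _
      apply max_le
      · positivity
      · nlinarith
    have h0 : 0 ≤ m := le_max_left _ _
    set M := s * mu + t * mv with hM
    have e : s • (u + mu • a.1) + t • (v + mv • a.1) = (s • u + t • v) + M • a.1 := by
      rw [hM]; module
    rw [e] at hy'
    rcases h0.eq_or_lt with h0 | h0
    · rw [← h0]; simpa using hy
    · have hM0 : 0 < M := lt_of_lt_of_le h0 h1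
      have := hcv hy hy' (a := 1 - m / M) (b := m / M)
        (by rw [sub_nonneg, div_le_one hM0]; exact h1) (by positivity) (by ring)
      convert this using 1
      have e2 : m • a.1 = (m / M) • (M • a.1) := by
        rw [smul_smul, div_mul_cancel₀ _ hM0.ne']
      rw [e2]; module
  have hST : S ⊆ T := by
    intro z hz
    refine ⟨subset_convexHull ℝ S hz, ?_⟩
    rcases lt_or_ge (aval c a z) 0 with h | h
    · rw [max_eq_right (by linarith), neg_smul, ← sub_eq_add_neg]
      exact subset_convexHull ℝ S (hS z hz h)
    · rw [max_eq_left (by linarith)]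
      simpa using subset_convexHull ℝ S hz
  intro y hy hlt
  have := (convexHull_min hST hT hy).2
  rw [max_eq_right (by linarith), neg_smul, ← sub_eq_add_neg] at this
  exact this

variable (D c) in
/-- convex hull of the down set -/
def CD (x : V) : Set V := convexHull ℝ (Down D c x)

lemma self_mem_CD (x : V) : x ∈ CD D c x := subset_convexHull ℝ _ (self_mem_Down x)

lemma CD_mono {x y : V} (hy : y ∈ CD D c x) : CD D c y ⊆ CD D c x := by
  refine convexHull_min ?_ (convex_convexHull ℝ _)
  intro z hz
  change Relation.ReflTransGen _ _ _ at hz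
  induction hz with
  | refl => exact hy
  | tail _ h ih =>
    obtain ⟨a, ha, h2, rfl⟩ := h
    refine convex_reflect a (Down D c x) (fun z hz h => ?_) _ ih h2
    exact Relation.ReflTransGen.tail hz ⟨a, ha, h, rfl⟩

lemma Down_simple (hp : IsP D c p) (j) {x : V} (hx : aval c (D.aSimple j) x < 0) {z : V}
    (hz : z ∈ Down D c x) : sAff c (D.aSimple j) z ∈ Down D c x := by
  have hj := aSimple_root D j
  have hj0 := D.ne_zero _ hj
  change Relation.ReflTransGen _ _ _ at hz
  induction hz with
  | refl => exact Relation.ReflTransGen.single ⟨_, aSimple_pos D j, hx, rfl⟩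
  | @tail z' z'' h0 h ih =>
    obtain ⟨b, hb, h2, rfl⟩ := h
    have hb1 := (hp.pos_iff b).1 hb
    by_cases hbe : b = D.aSimple j
    · subst hbe
      rw [sAff_sAff c _ hj0]; exact h0
    · refine Relation.ReflTransGen.tail ih ⟨arefl (D.aSimple j) b, arefl_simple_pos D j hb hbe, ?_, ?_⟩
      · rwa [aval_arefl D c hj hb1.1, sAff_sAff c _ hj0]
      · conv_rhs => rw [sAff]
        rw [aval_arefl D c hj hb1.1, sAff_sAff c _ hj0]
        have : aval c (D.aSimple j) (sAff c b z') = aval c (D.aSimple j) z'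
            - aval c b z' * ⟪b.1, coroot (D.aSimple j).1⟫ := aval_sAff _ _ _ _
        rw [sAff, this, sAff, sAff]
        simp only [arefl]
        module

lemma CD_simple (hp : IsP D c p) (j) {x : V} (hx : aval c (D.aSimple j) x < 0) {z : V}
    (hz : z ∈ CD D c x) : sAff c (D.aSimple j) z ∈ CD D c x := by
  have hT : Convex ℝ {y | sAff c (D.aSimple j) y ∈ CD D c x} := by
    intro u hu v hv s t hs ht hst
    change sAff c (D.aSimple j) (s • u + t • v) ∈ CD D c x
    rw [sAff_comb c _ _ _ _ _ hst]
    exact convex_convexHull ℝ _ hu hv hs ht hst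
  refine convexHull_min (fun y hy => ?_) hT hz
  exact subset_convexHull ℝ (Down D c x) (Down_simple hp j hx hy)

lemma norm_lt {a : V × ℤ} (h0 : a.1 ≠ 0) {z : V} (h1 : 0 < aval c a p) (h2 : aval c a z < 0) :
    ‖sAff c a z - p‖ < ‖z - p‖ := by
  rw [← sq_lt_sq₀ (norm_nonneg _) (norm_nonneg _), ← real_inner_self_eq_norm_sq,
    ← real_inner_self_eq_norm_sq]
  have hpos := inner_self_pos h0
  have e : ⟪z - p, a.1⟫ = (aval c a z - aval c a p) * ⟪a.1, a.1⟫ / 2 := by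
    simp only [aval, inner_coroot, inner_sub_left]
    field_simp
    ring
  have e2 : sAff c a z - p = (z - p) - aval c a z • a.1 := by rw [sAff]; module
  rw [e2, real_inner_sub_sub_self, inner_smul_right, inner_smul_right, inner_smul_left, e]
  simp only [RCLike.conj_to_real]
  have : aval c a z * aval c a p * ⟪a.1, a.1⟫ < 0 := by
    have := mul_neg_of_neg_of_pos h2 h1
    exact mul_neg_of_neg_of_pos this hpos
  nlinarith

lemma convex_ball_insert (x : V) : Convex ℝ {z : V | z = x ∨ ‖z - p‖ < ‖x - p‖} := by
  have key : ∀ v : V, ‖v - p‖ < ‖x - p‖ → ∀ s t : ℝ, 0 ≤ s → 0 ≤ t → s + t = 1 →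
      s • x + t • v = x ∨ ‖s • x + t • v - p‖ < ‖x - p‖ := by
    intro v hv s t hs ht hst
    rcases ht.eq_or_lt with h | h
    · left
      rw [← h] at hst ⊢
      simp at hst
      simp [hst]
    · right
      have e : s • x + t • v - p = s • (x - p) + t • (v - p) := by
        have : s = 1 - t := by linarith
        subst this; module
      rw [e]
      calc _ ≤ ‖s • (x - p)‖ + ‖t • (v - p)‖ := norm_add_le _ _
        _ = s * ‖x - p‖ + t * ‖v - p‖ := by
            rw [norm_smul, norm_smul, Real.norm_of_nonneg hs, Real.norm_of_nonneg ht]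
        _ < s * ‖x - p‖ + t * ‖x - p‖ := by
            have := mul_lt_mul_of_pos_left hv h
            linarith
        _ = _ := by rw [← add_mul, hst, one_mul]
  rintro u (rfl | hu) v (rfl | hv) s t hs ht hst
  · left; rw [← add_smul, hst, one_smul]
  · exact key v hv s t hs ht hst
  · have := key u hu t s ht hs (by linarith)
    rw [add_comm (t • v)] at this
    exact this
  · right
    have hb : Convex ℝ (Metric.ball p ‖x - p‖) := convex_ball _ _
    have := hb (mem_ball_iff_norm.2 hu) (mem_ball_iff_norm.2 hv) hs ht hst
    exact mem_ball_iff_norm.1 this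

lemma CD_norm (hp : IsP D c p) {x z : V} (hz : z ∈ CD D c x) : z = x ∨ ‖z - p‖ < ‖x - p‖ := by
  refine convexHull_min ?_ (convex_ball_insert (p := p) x) hz
  intro y hy
  change Relation.ReflTransGen _ _ _ at hy
  change y = x ∨ ‖y - p‖ < ‖x - p‖
  induction hy with
  | refl => left; rfl
  | tail h0 h ih =>
    obtain ⟨a, ha, h2, rfl⟩ := h
    have ha1 := (hp.pos_iff a).1 ha
    have := norm_lt (D.ne_zero _ ha1.1) ha1.2 h2
    right
    rcases ih with rfl | ih
    · exact this
    · exact this.trans ih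

/-! ### lattices -/

lemma root_mem_Q (D : RootSystemData V) {α : V} (h : α ∈ D.R0) (k : ℤ) :
    k • α ∈ D.rootLattice :=
  Submodule.smul_mem _ _ (Submodule.subset_span h)

lemma Q_add {x y : V} (hx : x ∈ D.rootLattice) (hy : y ∈ D.rootLattice) : x + y ∈ D.rootLattice :=
  Submodule.add_mem (Submodule.span ℤ (D.R0 : Set V)) hx hy

lemma Q_sub_mem_P {x y : V} (hx : x ∈ D.weightLattice) (h : x - y ∈ D.rootLattice) :
    y ∈ D.weightLattice := by
  have key : ∀ z ∈ Submodule.span ℤ (D.R0 : Set V), z ∈ D.weightLattice := by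
    intro z hz
    induction hz using Submodule.span_induction with
    | mem z hz => exact fun α hα => D.crystallographic α hα z hz
    | zero => exact fun α hα => ⟨0, by simp⟩
    | add u v _ _ hu hv =>
      intro α hα
      obtain ⟨k, hk⟩ := hu α hα
      obtain ⟨l, hl⟩ := hv α hα
      exact ⟨k + l, by rw [inner_add_left, hk, hl]; push_cast; rfl⟩
    | smul m u _ hu =>
      intro α hα
      obtain ⟨k, hk⟩ := hu α hα
      refine ⟨m * k, ?_⟩
      rw [← Int.cast_smul_eq_zsmul ℝ, inner_smul_left, hk]; simp
  have h1 := key _ h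
  intro α hα
  obtain ⟨k, hk⟩ := hx α hα
  obtain ⟨l, hl⟩ := h1 α hα
  refine ⟨k - l, ?_⟩
  rw [inner_sub_left] at hl
  push_cast; linarith

lemma finite_lattice (D : RootSystemData V) {S : Set V} (hS : Bornology.IsBounded S) (lam : V) :
    (S ∩ {μ : V | lam - μ ∈ D.rootLattice}).Finite := by
  have := finDim D
  have : ProperSpace V := FiniteDimensional.proper ℝ V
  have hQ : D.rootLattice ⊆ (Submodule.span ℤ (Set.range (sBasis D)) : Set V) := by
    change (Submodule.span ℤ (D.R0 : Set V) : Set V) ⊆ _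
    rw [SetLike.coe_subset_coe, Submodule.span_le]
    intro α hα
    obtain ⟨k, rfl⟩ := mem_pos_nat hα
    refine Submodule.sum_mem _ fun j _ => ?_
    rw [Int.cast_smul_eq_zsmul]
    exact Submodule.smul_mem _ _ (Submodule.subset_span ⟨j, by simp⟩)
  have hB : Bornology.IsBounded ((fun μ => lam - μ) '' S) := by
    obtain ⟨r, hr⟩ := hS.subset_ball 0
    apply (Metric.isBounded_ball (x := lam) (r := r)).subset
    rintro _ ⟨μ, hμ, rfl⟩
    have := hr hμ
    rw [mem_ball_iff_norm] at this ⊢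
    simpa using this
  have hf := ZSpan.setFinite_inter (sBasis D) hB
  apply Set.Finite.of_finite_image (f := fun μ => lam - μ)
  · apply hf.subset
    rintro _ ⟨μ, ⟨h1, h2⟩, rfl⟩
    exact ⟨⟨μ, h1, rfl⟩, hQ h2⟩
  · intro x _ y _ h
    simpa using h

lemma CD_bounded (hp : IsP D c p) (x : V) : Bornology.IsBounded (CD D c x) := by
  apply (Metric.isBounded_closedBall (x := p) (r := ‖x - p‖)).subset
  intro z hz
  rw [mem_closedBall_iff_norm]
  rcases CD_norm hp hz with rfl | h
  · exact le_rfl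
  · exact h.le

/-! ### the operators -/

lemma aval_int {cz : ℤ} {x : V} (hx : x ∈ D.weightLattice) {a : V × ℤ} (ha : D.IsAffRoot a) :
    ∃ k : ℤ, aval (cz : ℝ) a x = k := by
  obtain ⟨k, hk⟩ := hx _ ha
  exact ⟨k + a.2 * cz, by simp [aval, hk]⟩

lemma sub_sAff_mem_Q {cz : ℤ} {x : V} (hx : x ∈ D.weightLattice) {a : V × ℤ}
    (ha : D.IsAffRoot a) : x - sAff (cz : ℝ) a x ∈ D.rootLattice := by
  obtain ⟨k, hk⟩ := aval_int (cz := cz) hx ha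
  rw [sAff, hk, sub_sub_cancel, Int.cast_smul_eq_zsmul]
  exact root_mem_Q D ha k

lemma Iop_expand {cz : ℤ} (τ : V × ℤ → ℂ) {x : V} (hx : x ∈ D.weightLattice) {a : V × ℤ}
    (ha : D.IsAffRoot a) :
    ∃ M : V →₀ ℂ,
      M ∈ Finsupp.supported ℂ ℂ (segment ℝ x (sAff (cz : ℝ) a x) ∩ {y | x - y ∈ D.rootLattice}) ∧
      (0 < aval (cz : ℝ) a x → M (sAff (cz : ℝ) a x) = (τ a)⁻¹) ∧
      ∀ f : V → ℂ, Iop (cz : ℝ) τ a f x = Finsupp.linearCombination ℂ f M := by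
  have ha0 := D.ne_zero _ ha
  obtain ⟨m, hm⟩ := aval_int (cz := cz) hx ha
  have hs : sAff (cz : ℝ) a x = x - (m : ℝ) • a.1 := by rw [sAff, hm]
  have hsm : sAff (cz : ℝ) a x ∈ segment ℝ x (sAff (cz : ℝ) a x) ∩ {y | x - y ∈ D.rootLattice} :=
    ⟨right_mem_segment ℝ _ _, sub_sAff_mem_Q hx ha⟩
  have hmem : ∀ (k : ℤ) (t : ℝ), 0 ≤ t → t ≤ 1 → t * m = k →
      x - k • a.1 ∈ segment ℝ x (sAff (cz : ℝ) a x) ∩ {y | x - y ∈ D.rootLattice} := by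
    intro k t h0 h1 he
    constructor
    · refine ⟨1 - t, t, by linarith, h0, by ring, ?_⟩
      rw [hs, ← Int.cast_smul_eq_zsmul ℝ, ← he]
      module
    · change x - (x - k • a.1) ∈ D.rootLattice
      rw [sub_sub_cancel]; exact root_mem_Q D ha k
  rcases lt_trichotomy m 0 with hneg | hz | hpos
  · refine ⟨Finsupp.single (sAff (cz : ℝ) a x) (τ a) + (τ a - (τ a)⁻¹) •
      ∑ k ∈ Finset.Ico (0 : ℤ) (-m), Finsupp.single (x + k • a.1) 1, ?_, ?_, ?_⟩
    · refine Submodule.add_mem _ (Finsupp.single_mem_supported _ _ hsm)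
        (Submodule.smul_mem _ _ (Submodule.sum_mem _ fun k hk => Finsupp.single_mem_supported _ _ ?_))
      rw [Finset.mem_Ico] at hk
      have hm' : (m : ℝ) < 0 := by exact_mod_cast hneg
      have hk1 : (0 : ℝ) ≤ k := by exact_mod_cast hk.1
      have hk2 : (k : ℝ) < -m := by exact_mod_cast hk.2
      have := hmem (-k) ((-k : ℝ) / m) (div_nonneg_of_nonpos (by linarith) hm'.le)
        (by rw [div_le_one_of_neg hm']; linarith) (by rw [div_mul_cancel₀ _ hm'.ne]; push_cast; rfl)
      simpa using this
    · intro h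
      rw [hm] at h
      exact absurd (by exact_mod_cast h : 0 < m) (by omega)
    · intro f
      have h1 : ¬ (0 < (m : ℝ)) := by exact_mod_cast (by omega : ¬ 0 < m)
      have h2 : ¬ ((m : ℝ) = 0) := by exact_mod_cast (by omega : ¬ m = 0)
      simp only [Iop, Jop, hm, h1, h2, if_false, Int.floor_intCast, map_add, map_smul, map_sum,
        Finsupp.linearCombination_single, one_mul, smul_eq_mul]
  · subst hz
    refine ⟨Finsupp.single (sAff (cz : ℝ) a x) (τ a), Finsupp.single_mem_supported _ _ hsm, ?_, ?_⟩
    · intro h; rw [hm] at h; simp at h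
    · intro f
      simp [Iop, Jop, hm, Finsupp.linearCombination_single]
  · refine ⟨Finsupp.single (sAff (cz : ℝ) a x) (τ a) + (τ a - (τ a)⁻¹) •
      (-∑ k ∈ Finset.Icc (1 : ℤ) m, Finsupp.single (x - k • a.1) 1), ?_, ?_, ?_⟩
    · refine Submodule.add_mem _ (Finsupp.single_mem_supported _ _ hsm)
        (Submodule.smul_mem _ _ (Submodule.neg_mem _
          (Submodule.sum_mem _ fun k hk => Finsupp.single_mem_supported _ _ ?_)))
      rw [Finset.mem_Icc] at hk
      have hm' : (0 : ℝ) < m := by exact_mod_cast hpos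
      have hk1 : (1 : ℝ) ≤ k := by exact_mod_cast hk.1
      have hk2 : (k : ℝ) ≤ m := by exact_mod_cast hk.2
      exact hmem k ((k : ℝ) / m) (by positivity)
        (by rw [div_le_one hm']; linarith) (by rw [div_mul_cancel₀ _ hm'.ne'])
    · intro _
      have : ∀ k ∈ Finset.Icc (1 : ℤ) m, k ≠ m →
          (Finsupp.single (x - k • a.1) (1 : ℂ)) (sAff (cz : ℝ) a x) = 0 := by
        intro k _ hkm
        apply Finsupp.single_eq_of_ne
        rw [hs, Int.cast_smul_eq_zsmul]
        intro h
        have h1 : m • a.1 = k • a.1 := sub_right_injective h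
        rw [← Int.cast_smul_eq_zsmul ℝ, ← Int.cast_smul_eq_zsmul ℝ] at h1
        have := smul_left_injective ℝ ha0 h1
        exact hkm (by exact_mod_cast this.symm)
      have e : x - m • a.1 = sAff (cz : ℝ) a x := by rw [hs, Int.cast_smul_eq_zsmul]
      rw [Finsupp.add_apply, Finsupp.smul_apply, Finsupp.neg_apply, Finsupp.finsetSum_apply,
        Finset.sum_eq_single m this (fun h => absurd (Finset.mem_Icc.2 ⟨hpos, le_rfl⟩) h), e]
      simp
    · intro f
      have h1 : (0 < (m : ℝ)) := by exact_mod_cast hpos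
      simp only [Iop, Jop, hm, h1, if_true, Int.floor_intCast, map_add, map_smul, map_sum, map_neg,
        Finsupp.linearCombination_single, one_mul, smul_eq_mul]

/-! ### words -/

lemma foldr_comp {α : Type*} (L : List (α → α)) (g : α → α) :
    L.foldr (· ∘ ·) g = L.foldr (· ∘ ·) id ∘ g := by
  induction L with
  | nil => rfl
  | cons h t ih => simp only [List.foldr_cons, ih]; rfl

variable (D c) in
/-- composition of simple reflections along a word -/
def wordMap (l : List (Fin (D.n + 1))) : V → V :=
  (l.map fun j => sAff c (D.aSimple j)).foldr (· ∘ ·) id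

lemma wordMap_append (l : List (Fin (D.n + 1))) (j) (x : V) :
    wordMap D c (l ++ [j]) x = wordMap D c l (sAff c (D.aSimple j) x) := by
  simp only [wordMap, List.map_append, List.foldr_append]
  rw [foldr_comp]
  rfl

lemma wordOp_append (τ : V × ℤ → ℂ) (l : List (Fin (D.n + 1))) (j) (f : V → ℂ) :
    D.wordOp c τ (l ++ [j]) f = D.wordOp c τ l (Iop c τ (D.aSimple j) f) := by
  simp only [RootSystemData.wordOp, List.map_append, List.foldr_append]
  rw [foldr_comp]
  rfl

lemma word_len (hc : 0 < c) (hp : IsP D c p) (l : List (Fin (D.n + 1))) :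
    ∀ w : Equiv.Perm V, (∀ x, w x = wordMap D c l x) → w ∈ D.WR c ∧ D.len c w ≤ l.length := by
  induction l using List.reverseRecOn with
  | nil =>
    intro w h
    have : w = 1 := Equiv.ext h
    subst this
    exact ⟨one_mem _, by rw [len_one hp]; exact Nat.zero_le _⟩
  | append_singleton l j ih =>
    intro w h
    have ha := aSimple_root D j
    obtain ⟨h1, h2⟩ := ih (w * sPerm D c _ ha) (fun x => by
      rw [Equiv.Perm.mul_apply, h, wordMap_append, sPerm_apply, sAff_sAff c _ (D.ne_zero _ ha)])
    have hwm : w ∈ D.WR c := (Subgroup.mul_mem_cancel_right _ (sPerm_mem _ ha)).1 h1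
    refine ⟨hwm, ?_⟩
    rw [len_mul_sPerm hp hwm] at h2
    have h3 := Sep_simple_le hc hp j (sAff c (D.aSimple j) (w⁻¹ p))
    rw [sAff_sAff c _ (D.ne_zero _ ha), ← len_eq hp hwm] at h3
    simp only [List.length_append, List.length_singleton]
    omega

lemma red_step (hc : 0 < c) (hp : IsP D c p) (hw : D.IsWmin c wmin)
    {l : List (Fin (D.n + 1))} {j} {x : V} (h : D.IsReducedWord c (wmin x) (l ++ [j])) :
    aval c (D.aSimple j) x < 0 ∧ aval c (D.aSimple j) ((wmin x)⁻¹ p) < 0 ∧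
    wmin (sAff c (D.aSimple j) x) = wmin x * sPerm D c _ (aSimple_root D j) ∧
    D.IsReducedWord c (wmin (sAff c (D.aSimple j) x)) l := by
  obtain ⟨hl, hword⟩ := h
  have ha := aSimple_root D j
  have hap := aSimple_pos D j
  have ha0 := D.ne_zero _ ha
  set w := wmin x with hwdef
  have hwm : w ∈ D.WR c := (hw x).1
  set w' := w * sPerm D c _ ha with hw'
  have hword' : ∀ y, w' y = wordMap D c l y := by
    intro y
    have := hword (sAff c (D.aSimple j) y)
    change _ = wordMap D c (l ++ [j]) _ at this
    rw [wordMap_append, sAff_sAff c _ ha0] at this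
    exact this
  obtain ⟨h1, h2⟩ := word_len hc hp l w' hword'
  simp only [List.length_append, List.length_singleton] at hl
  have hlt : D.len c w' < D.len c w := by omega
  have hneg := (len_lt_iff hc hp hwm hap ha).1 hlt
  have hle := (sign_compat hp hwm (hw x).2.1 ha).1 hneg
  have hx : aval c (D.aSimple j) x < 0 := by
    refine lt_of_le_of_ne hle fun h0 => ?_
    exact wmin_pos hc hp hw hap h0 hneg
  have hstep : ∀ v ∈ D.WR c, D.len c (v * sPerm D c _ ha) ≤ D.len c v + 1 := by
    intro v hv
    rw [len_mul_sPerm hp hv, len_eq hp hv]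
    exact Sep_simple_le hc hp j _
  have hweq : w = w' * sPerm D c _ ha := by rw [hw', mul_assoc, sPerm_mul_self, mul_one]
  have h3 := hstep w' h1
  rw [← hweq] at h3
  have hal : w' (sAff c (D.aSimple j) x) ∈ D.alcove c := by
    rw [hw', Equiv.Perm.mul_apply, sPerm_apply, sAff_sAff c _ ha0]; exact (hw x).2.1
  have heq : wmin (sAff c (D.aSimple j) x) = w' := by
    rcases (hw (sAff c (D.aSimple j) x)).2.2 w' h1 hal with h | h
    · exfalso
      set v := wmin (sAff c (D.aSimple j) x) with hv
      have hvm : v ∈ D.WR c := (hw _).1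
      have h4 := hstep v hvm
      have h5 : (v * sPerm D c _ ha) x ∈ D.alcove c := (hw (sAff c (D.aSimple j) x)).2.1
      rcases (hw x).2.2 _ (mul_mem hvm (sPerm_mem _ ha)) h5 with h6 | h6
      · rw [← hwdef] at h6; omega
      · rw [h6, ← hwdef] at h4; omega
    · exact h.symm
  refine ⟨hx, hneg, heq, ?_⟩
  rw [heq]
  exact ⟨by omega, hword'⟩

lemma tauw_step {cz : ℤ} (hc : (0 : ℝ) < cz) (hp : IsP D (cz : ℝ) p) {τ : V × ℤ → ℂ}
    (hτ : D.IsMultiplicity (cz : ℝ) τ) (j) {w : Equiv.Perm V} (hw : w ∈ D.WR (cz : ℝ))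
    (h : aval (cz : ℝ) (D.aSimple j) (w⁻¹ p) < 0) :
    D.tauw (cz : ℝ) τ w =
      τ (D.aSimple j) * D.tauw (cz : ℝ) τ (w * sPerm D (cz : ℝ) _ (aSimple_root D j)) := by
  have ha := aSimple_root D j
  have ha0 := D.ne_zero _ ha
  set q := sAff (cz : ℝ) (D.aSimple j) (w⁻¹ p) with hq
  have hq1 : 0 < aval (cz : ℝ) (D.aSimple j) q := by
    rw [hq, aval_sAff_self _ _ ha0]; linarith
  have e1 : D.RW (cz : ℝ) w = insert (D.aSimple j) (arefl (D.aSimple j) '' Sep D cz p q) := by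
    rw [RW_eq hp hw, ← Sep_simple_eq hc hp j q hq1, hq, sAff_sAff _ _ ha0]
  have e2 : D.RW (cz : ℝ) (w * sPerm D (cz : ℝ) _ ha) = Sep D cz p q := by
    rw [RW_eq hp (mul_mem hw (sPerm_mem _ ha)), mul_inv_rev, sPerm_inv]
    rfl
  have hf := Sep_finite (D := D) (p := p) hc q
  rw [RootSystemData.tauw, RootSystemData.tauw, e1, e2,
    finprod_mem_insert _ (simple_not_mem hp j q) (hf.image _), finprod_mem_image]
  · congr 1
    apply finprod_mem_congr rfl
    rintro b ⟨hb, -, -⟩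
    symm
    refine hτ.2 (sPerm D (cz : ℝ) _ ha) (Subgroup.subset_closure (Or.inl ⟨_, ha, fun _ => rfl⟩))
      b _ hb (arefl_root D ha hb) fun x => ?_
    rw [aval_arefl D _ ha hb, sPerm_inv]
    rfl
  · rintro b ⟨hb, -, -⟩ b' ⟨hb', -, -⟩ he
    rw [← arefl_arefl D _ hc ha hb, he, arefl_arefl D _ hc ha hb']

lemma main {cz : ℤ} (hc : (0 : ℝ) < cz) (hp : IsP D (cz : ℝ) p) {τ : V × ℤ → ℂ}
    (hτ : D.IsMultiplicity (cz : ℝ) τ) (hw : D.IsWmin (cz : ℝ) wmin)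
    (l : List (Fin (D.n + 1))) : ∀ lam ∈ D.weightLattice,
    D.IsReducedWord (cz : ℝ) (wmin lam) l →
    ∃ K : V →₀ ℂ,
      K ∈ Finsupp.supported ℂ ℂ (CD D (cz : ℝ) lam ∩ {μ | lam - μ ∈ D.rootLattice}) ∧
      K lam = (D.tauw (cz : ℝ) τ (wmin lam))⁻¹ ∧
      ∀ f : V → ℂ, D.wordOp (cz : ℝ) τ l f (wmin lam lam) = Finsupp.linearCombination ℂ f K := by
  induction l using List.reverseRecOn with
  | nil =>
    intro lam hlam hred
    have h1 : wmin lam = 1 := Equiv.ext hred.2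
    refine ⟨Finsupp.single lam 1, Finsupp.single_mem_supported _ _ ⟨self_mem_CD lam, ?_⟩, ?_, ?_⟩
    · change lam - lam ∈ D.rootLattice
      rw [sub_self]; exact Submodule.zero_mem _
    · have : D.RW (cz : ℝ) 1 = ∅ := by
        have hl := len_one (D := D) hp
        rw [len_eq hp (one_mem _), Set.ncard_eq_zero (Sep_finite hc _)] at hl
        rw [RW_eq hp (one_mem _), hl]
      rw [h1, RootSystemData.tauw, this]
      simp
    · intro f
      rw [h1, Finsupp.linearCombination_single, one_smul]
      rfl
  | append_singleton l j ih =>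
    intro lam hlam hred
    have ha := aSimple_root D j
    have ha0 := D.ne_zero _ ha
    obtain ⟨hx, hneg, heq, hred'⟩ := red_step hc hp hw hred
    set a := D.aSimple j with hadef
    set lam' := sAff (cz : ℝ) a lam with hlam'
    have hQ : lam - lam' ∈ D.rootLattice := sub_sAff_mem_Q hlam ha
    have hP' : lam' ∈ D.weightLattice := Q_sub_mem_P hlam hQ
    obtain ⟨K', hK'supp, hK'diag, hK'⟩ := ih lam' hP' hred'
    have hs' : sAff (cz : ℝ) a lam' = lam := sAff_sAff _ _ ha0 _
    choose! M hM1 hM2 hM3 using fun (x : V) (hx : x ∈ D.weightLattice) =>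
      Iop_expand (cz := cz) τ hx ha
    have hsub : ∀ μ ∈ K'.support, μ ∈ CD D (cz : ℝ) lam' ∧ lam' - μ ∈ D.rootLattice :=
      fun μ hμ => (Finsupp.mem_supported _ _).1 hK'supp hμ
    have hmemP : ∀ μ ∈ K'.support, μ ∈ D.weightLattice :=
      fun μ hμ => Q_sub_mem_P hP' (hsub μ hμ).2
    have hle : lam' ∈ CD D (cz : ℝ) lam := CD_simple hp j hx (self_mem_CD lam)
    have hCD : ∀ μ ∈ K'.support, μ ∈ CD D (cz : ℝ) lam := fun μ hμ => CD_mono hle (hsub μ hμ).1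
    have hCDs : ∀ μ ∈ K'.support, sAff (cz : ℝ) a μ ∈ CD D (cz : ℝ) lam :=
      fun μ hμ => CD_simple hp j hx (hCD μ hμ)
    refine ⟨∑ μ ∈ K'.support, K' μ • M μ, ?_, ?_, ?_⟩
    · refine Submodule.sum_mem _ fun μ hμ => Submodule.smul_mem _ _ ?_
      refine Finsupp.supported_mono ?_ (hM1 μ (hmemP μ hμ))
      rintro y ⟨hy1, hy2⟩
      refine ⟨(convex_convexHull ℝ _).segment_subset (hCD μ hμ) (hCDs μ hμ) hy1, ?_⟩
      have := Q_add (Q_add hQ (hsub μ hμ).2) hy2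
      have e : lam - lam' + (lam' - μ) + (μ - y) = lam - y := by abel
      rw [e] at this
      exact this
    · rw [Finsupp.finsetSum_apply, Finset.sum_eq_single lam']
      · rw [Finsupp.smul_apply, hK'diag]
        have h1 := hM2 lam' hP' (by rw [hlam', aval_sAff_self _ _ ha0]; linarith)
        rw [hs'] at h1
        rw [h1, heq, tauw_step hc hp hτ j (hw lam).1 hneg, mul_inv, smul_eq_mul, mul_comm]
      · intro μ hμ hne
        rw [Finsupp.smul_apply]
        have : M μ lam = 0 := by
          by_contra hh
          have h1 := (Finsupp.mem_supported _ _).1 (hM1 μ (hmemP μ hμ))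
            (Finsupp.mem_support_iff.2 hh)
          have h2 : ‖lam' - p‖ < ‖lam - p‖ :=
            norm_lt ha0 ((hp.pos_iff _).1 (aSimple_pos D j)).2 hx
          have h3 : ‖μ - p‖ < ‖lam - p‖ := by
            rcases CD_norm hp (hsub μ hμ).1 with rfl | h
            · exact h2
            · exact h.trans h2
          have h4 : ‖sAff (cz : ℝ) a μ - p‖ < ‖lam - p‖ := by
            rcases CD_norm hp (hCDs μ hμ) with h | h
            · exact absurd (by rw [hlam', ← h, sAff_sAff _ _ ha0]) hne
            · exact h
          have hb : Convex ℝ (Metric.ball p ‖lam - p‖) := convex_ball _ _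
          have := hb.segment_subset (mem_ball_iff_norm.2 h3) (mem_ball_iff_norm.2 h4) h1.1
          rw [mem_ball_iff_norm] at this
          exact lt_irrefl _ this
        rw [this, smul_zero]
      · intro h
        rw [Finsupp.notMem_support_iff.1 h, zero_smul]; rfl
    · intro f
      have hpl : wmin lam lam = wmin lam' lam' := by
        rw [heq, Equiv.Perm.mul_apply, sPerm_apply, hs']
      rw [wordOp_append, hpl, hK', Finsupp.linearCombination_apply, Finsupp.sum, map_sum]
      refine Finset.sum_congr rfl fun μ hμ => ?_
      rw [map_smul, hM3 μ (hmemP μ hμ)]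

end S5

open RootSystemData in
/-- (a) the set of weights `⪯`-below a given `λ ∈ P` equals
`Conv [λ₊, λ] ∩ (λ + Q)` and is finite; (b) the intertwining operator `𝒥` is
triangular with respect to `⪯`, with diagonal coefficient `J_{λ,λ} = τ_{w_λ}⁻²`. -/
theorem statement5 {V : Type*} [NormedAddCommGroup V] [InnerProductSpace ℝ V]
    (D : RootSystemData V) (cz : ℤ) (hc : 1 < cz)
    (τ : V × ℤ → ℂ) (hτ : D.IsMultiplicity (cz : ℝ) τ)
    (wmin : V → Equiv.Perm V) (hwmin : D.IsWmin (cz : ℝ) wmin)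
    (Iw : Equiv.Perm V → (V → ℂ) → V → ℂ)
    (hIw : ∀ x : V, ∃ l : List (Fin (D.n + 1)),
      D.IsReducedWord (cz : ℝ) (wmin x) l ∧ Iw (wmin x) = D.wordOp (cz : ℝ) τ l) :
    -- (a)
    (∀ lam ∈ D.weightLattice,
      {μ : V | μ ∈ D.weightLattice ∧ D.pleq (cz : ℝ) wmin μ lam}
          = convexHull ℝ (D.vInterval (cz : ℝ) wmin ((wmin lam) lam) lam)
            ∩ {μ : V | lam - μ ∈ D.rootLattice} ∧
      Set.Finite {μ : V | μ ∈ D.weightLattice ∧ D.pleq (cz : ℝ) wmin μ lam}) ∧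
    -- (b)
    (∃ J : V → V → ℂ, ∀ lam ∈ D.weightLattice,
      (∀ f : V → ℂ,
        D.Jcal (cz : ℝ) τ wmin Iw f lam
          = ∑ᶠ μ ∈ {μ : V | μ ∈ D.weightLattice ∧ D.pleq (cz : ℝ) wmin μ lam},
              J lam μ * f μ) ∧
      J lam lam = ((D.tauw (cz : ℝ) τ (wmin lam)) ^ 2)⁻¹) := by
  have hc0 : (0 : ℝ) < cz := by exact_mod_cast (by omega : 0 < cz)
  obtain ⟨p, hp⟩ := S5.exists_P D (cz : ℝ) hc0
  have hset : ∀ lam ∈ D.weightLattice,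
      {μ : V | μ ∈ D.weightLattice ∧ D.pleq (cz : ℝ) wmin μ lam}
        = S5.CD D (cz : ℝ) lam ∩ {μ : V | lam - μ ∈ D.rootLattice} := by
    intro lam hlam
    ext μ
    simp only [RootSystemData.pleq, S5.interval_eq hc0 hp hwmin]
    constructor
    · rintro ⟨_, h1, h2⟩
      exact ⟨h2 (S5.self_mem_CD μ), h1⟩
    · rintro ⟨h1, h2⟩
      exact ⟨S5.Q_sub_mem_P hlam h2, h2, S5.CD_mono h1⟩
  refine ⟨fun lam hlam => ?_, ?_⟩
  · rw [hset lam hlam, S5.interval_eq hc0 hp hwmin]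
    exact ⟨rfl, S5.finite_lattice D (S5.CD_bounded hp lam) lam⟩
  · have hK : ∀ lam ∈ D.weightLattice, ∃ K : V →₀ ℂ,
        K ∈ Finsupp.supported ℂ ℂ (S5.CD D (cz : ℝ) lam ∩ {μ | lam - μ ∈ D.rootLattice}) ∧
        K lam = (D.tauw (cz : ℝ) τ (wmin lam))⁻¹ ∧
        ∀ f : V → ℂ, Iw (wmin lam) f (wmin lam lam) = Finsupp.linearCombination ℂ f K := by
      intro lam hlam
      obtain ⟨l, hl, hI⟩ := hIw lam
      rw [hI]
      exact S5.main hc0 hp hτ hwmin l lam hlam hl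
    choose! K hK1 hK2 hK3 using hK
    refine ⟨fun lam μ => (D.tauw (cz : ℝ) τ (wmin lam))⁻¹ * K lam μ, fun lam hlam => ⟨fun f => ?_, ?_⟩⟩
    · rw [hset lam hlam, RootSystemData.Jcal, hK3 lam hlam,
        Finsupp.linearCombination_apply, Finsupp.sum, Finset.mul_sum]
      rw [finsum_mem_eq_sum_of_inter_support_eq (t := (K lam).support.filter fun μ =>
        (D.tauw (cz : ℝ) τ (wmin lam))⁻¹ * K lam μ * f μ ≠ 0)]
      · rw [Finset.sum_filter_ne_zero]
        refine Finset.sum_congr rfl fun μ _ => ?_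
        rw [smul_eq_mul]; ring
      · ext μ
        have hsup := (Finsupp.mem_supported _ _).1 (hK1 lam hlam)
        simp only [Set.mem_inter_iff, Function.mem_support, Finset.coe_filter]
        constructor
        · rintro ⟨_, h⟩
          refine ⟨⟨?_, h⟩, h⟩
          rw [Finsupp.mem_support_iff]
          intro h0
          rw [h0] at h
          simp at h
        · rintro ⟨⟨h1, _⟩, h⟩
          exact ⟨hsup h1, h⟩
    · change (D.tauw (cz : ℝ) τ (wmin lam))⁻¹ * K lam lam = _
      rw [hK2 lam hlam, sq, mul_inv]
end
end
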